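/- arXiv:2212.04626 — 7 statements merged into one kernel-verified Lean document; each statement's English description precedes it below -/
import Mathlib

section
/- For every g ∈ O(V) such that p_g is invertible: p_{g⁻¹} = p_gᵗ and q_{g⁻¹} = q_gᵗ, the map p_{g⁻¹} is invertible, and the operators T_g := q_g∘p_g⁻¹ and T̂_g := T_{g⁻¹} = q_{g⁻¹}∘p_{g⁻¹}⁻¹ satisfy T̂_g = −p_g⁻¹ ∘ T_g ∘ p_g. -/
/-!
Since `J` is orthogonal with `J² = -1`, it is skew, so transposition commutes with taking the
`J`-linear part `p` and the `J`-antilinear part `q`; as `g⁻¹ = gᵗ`, this gives `p_{g⁻¹} = p_gᵗ` and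
`q_{g⁻¹} = q_gᵗ`. The `J`-antilinear part of `g g⁻¹ = 1` is `p_g q_{g⁻¹} + q_g p_{g⁻¹} = 0`, and
multiplying by `p_g⁻¹` on the left and by `p_{g⁻¹}⁻¹` on the right gives
`T̂_g = -p_g⁻¹ q_g = -p_g⁻¹ T_g p_g`.
-/

open scoped RealInnerProductSpace

section Parts

variable (R : Type*) {A : Type*} [CommRing R] [Invertible (2 : R)] [Ring A] [Algebra R A]

/-- The part of `a` commuting with `J` when `J * J = -1`: for endomorphisms of a space with complex
structure `J` this is the `J`-linear part `p_a`. -/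
def complexLinearPart (J a : A) : A :=
  (⅟2 : R) • (a - J * a * J)

/-- The part of `a` anticommuting with `J` when `J * J = -1`: for endomorphisms of a space with
complex structure `J` this is the `J`-antilinear part `q_a`. -/
def complexAntilinearPart (J a : A) : A :=
  (⅟2 : R) • (a + J * a * J)

/-- The operator `T_a = q_a p_a⁻¹`; it is `0` by convention when the linear part `p_a` is not a
unit. -/
noncomputable def antilinearRatio (J a : A) : A :=
  complexAntilinearPart R J a * Ring.inverse (complexLinearPart R J a)

variable {J : A}

theorem complexAntilinearPart_one (hJ : J * J = -1) : complexAntilinearPart R J 1 = 0 := by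
  rw [complexAntilinearPart, mul_one, hJ, add_neg_cancel, smul_zero]

theorem complexAntilinearPart_mul (hJ : J * J = -1) (a b : A) :
    complexAntilinearPart R J (a * b) =
      complexLinearPart R J a * complexAntilinearPart R J b +
        complexAntilinearPart R J a * complexLinearPart R J b := by
  have cancel_J : J * a * J * (J * b * J) = -(J * (a * b) * J) := by
    calc J * a * J * (J * b * J) = J * a * (J * J) * b * J := by noncomm_ring
      _ = -(J * (a * b) * J) := by rw [hJ]; noncomm_ring
  have expand : (a - J * a * J) * (b + J * b * J) + (a + J * a * J) * (b - J * b * J) =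
      (2 : R) • (a * b + J * (a * b) * J) := by
    calc _ = a * b + a * b - (J * a * J * (J * b * J) + J * a * J * (J * b * J)) := by
          noncomm_ring
      _ = (2 : R) • (a * b + J * (a * b) * J) := by
          rw [cancel_J, two_smul]; abel
  simp only [complexLinearPart, complexAntilinearPart, smul_mul_smul_comm, ← smul_add]
  rw [expand, smul_smul, mul_assoc (⅟2 : R), invOf_mul_self, mul_one]

theorem antilinearRatio_of_mul_eq_one {a b : A} (hJ : J * J = -1) (hab : a * b = 1)
    (ha : IsUnit (complexLinearPart R J a)) (hb : IsUnit (complexLinearPart R J b)) :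
    antilinearRatio R J b =
      -(Ring.inverse (complexLinearPart R J a) * antilinearRatio R J a *
        complexLinearPart R J a) := by
  simp only [antilinearRatio]
  set p := complexLinearPart R J a
  set q := complexAntilinearPart R J a
  set p' := complexLinearPart R J b
  set q' := complexAntilinearPart R J b
  have antilinear_part_of_one : p * q' + q * p' = 0 := by
    rw [← complexAntilinearPart_mul R hJ, hab, complexAntilinearPart_one R hJ]
  have q'_eq : q' = -(Ring.inverse p * q * p') := by
    rw [← Ring.inverse_mul_cancel_left p q' ha, eq_neg_of_add_eq_zero_left antilinear_part_of_one,
      mul_neg, mul_assoc]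
  calc q' * Ring.inverse p' = -(Ring.inverse p * q) := by
        rw [q'_eq, neg_mul, Ring.mul_inverse_cancel_right _ _ hb]
    _ = -(Ring.inverse p * (q * Ring.inverse p) * p) := by
        rw [← mul_assoc, Ring.inverse_mul_cancel_right _ _ ha]

end Parts

section Star

theorem inverse_eq_star_of_mem_unitary {M : Type*} [MonoidWithZero M] [StarMul M] {u : M}
    (hu : u ∈ unitary M) : Ring.inverse u = star u :=
  Ring.inverse_unit (Unitary.toUnits ⟨u, hu⟩)

theorem mem_unitary_of_inner_map_map {𝕜 V : Type*} [RCLike 𝕜] [NormedAddCommGroup V]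
    [InnerProductSpace 𝕜 V] [FiniteDimensional 𝕜 V] {u : Module.End 𝕜 V}
    (hu : ∀ x y : V, inner 𝕜 (u x) (u y) = inner 𝕜 x y) : u ∈ unitary (Module.End 𝕜 V) := by
  have star_mul_self : star u * u = 1 := by
    ext x
    refine ext_inner_right 𝕜 fun y => ?_
    rw [LinearMap.star_eq_adjoint, Module.End.mul_apply, LinearMap.adjoint_inner_left, hu,
      Module.End.one_apply]
  exact ⟨star_mul_self, mul_eq_one_comm.mp star_mul_self⟩

theorem star_eq_neg_of_mem_unitary {A : Type*} [Ring A] [StarMul A] {J : A} (hJ : J ∈ unitary A)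
    (hJ2 : J * J = -1) : star J = -J :=
  left_inv_eq_right_inv (Unitary.star_mul_self_of_mem hJ) (by rw [mul_neg, hJ2, neg_neg])

theorem star_invOf_two (R : Type*) [Semiring R] [StarRing R] [Invertible (2 : R)] :
    star (⅟2 : R) = ⅟2 :=
  (IsSelfAdjoint.ofNat (R := R) 2).invOf.star_eq

variable (R : Type*) {A : Type*} [CommRing R] [StarRing R] [Invertible (2 : R)] [Ring A]
  [StarRing A] [Algebra R A] [StarModule R A] {J g : A}

theorem star_complexLinearPart (hJ : star J = -J) (a : A) :
    star (complexLinearPart R J a) = complexLinearPart R J (star a) := by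
  simp [complexLinearPart, star_invOf_two, hJ, mul_assoc]

theorem star_complexAntilinearPart (hJ : star J = -J) (a : A) :
    star (complexAntilinearPart R J a) = complexAntilinearPart R J (star a) := by
  simp [complexAntilinearPart, star_invOf_two, hJ, mul_assoc]

theorem stmt_3_general (hJ2 : J * J = -1) (hJ : J ∈ unitary A) (hg : g ∈ unitary A)
    (hp : IsUnit (complexLinearPart R J g)) :
    complexLinearPart R J (Ring.inverse g) = star (complexLinearPart R J g) ∧
    complexAntilinearPart R J (Ring.inverse g) = star (complexAntilinearPart R J g) ∧
    IsUnit (complexLinearPart R J (Ring.inverse g)) ∧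
    antilinearRatio R J (Ring.inverse g) =
      -(Ring.inverse (complexLinearPart R J g) * antilinearRatio R J g *
        complexLinearPart R J g) := by
  have hJ_skew : star J = -J := star_eq_neg_of_mem_unitary hJ hJ2
  rw [inverse_eq_star_of_mem_unitary hg]
  have hp_star : complexLinearPart R J (star g) = star (complexLinearPart R J g) :=
    (star_complexLinearPart R hJ_skew g).symm
  have hp' : IsUnit (complexLinearPart R J (star g)) := hp_star ▸ hp.star
  exact ⟨hp_star, (star_complexAntilinearPart R hJ_skew g).symm, hp',
    antilinearRatio_of_mul_eq_one R hJ2 (Unitary.mul_star_self_of_mem hg) hp hp'⟩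

end Star

/-- For every `g ∈ O(V)` such that `p_g` is invertible:
`p_{g⁻¹} = p_gᵗ` and `q_{g⁻¹} = q_gᵗ`, the map `p_{g⁻¹}` is invertible, and the operators
`T_g := q_g∘p_g⁻¹` and `T̂_g := T_{g⁻¹} = q_{g⁻¹}∘p_{g⁻¹}⁻¹` satisfy
`T̂_g = −p_g⁻¹ ∘ T_g ∘ p_g`. -/
theorem stmt_3 {V : Type*} [NormedAddCommGroup V] [InnerProductSpace ℝ V]
    [FiniteDimensional ℝ V] (m : ℕ) (hdim : Module.finrank ℝ V = 2 * m)
    (J : Module.End ℝ V) (hJ2 : J * J = -1)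
    (hJd : ∀ u v : V, ⟪J u, J v⟫ = ⟪u, v⟫)
    (g : Module.End ℝ V) (hgo : LinearMap.adjoint g * g = 1)
    (p q p' q' : Module.End ℝ V)
    (hp : p = (2⁻¹ : ℝ) • (g - J * g * J))
    (hq : q = (2⁻¹ : ℝ) • (g + J * g * J))
    (hpu : IsUnit p)
    (hp' : p' = (2⁻¹ : ℝ) • (Ring.inverse g - J * Ring.inverse g * J))
    (hq' : q' = (2⁻¹ : ℝ) • (Ring.inverse g + J * Ring.inverse g * J)) :
    p' = LinearMap.adjoint p ∧
    q' = LinearMap.adjoint q ∧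
    IsUnit p' ∧
    q' * Ring.inverse p' = -(Ring.inverse p * (q * Ring.inverse p) * p) := by
  subst hp hq hp' hq'
  exact stmt_3_general ℝ hJ2 (mem_unitary_of_inner_map_map hJd) ⟨hgo, mul_eq_one_comm.mp hgo⟩ hpu
end

section
/- For every g ∈ Sp(V), the operator T_g := q_g∘p_g⁻¹ satisfies: T_g∘J = −J∘T_g (antilinearity), T_gᵗ = T_g (symmetry), 1 − T_g² = (p_g∘p_gᵗ)⁻¹, and 0 < 1 − T_g² ≤ 1 (i.e., 1 − T_g² is positive definite and T_g² is positive semidefinite). -/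
/-!
Since `J` is orthogonal with `J² = -1`, `Jᵗ = -J`, and preservation of the symplectic form reads
`gᵗ J g = J`. In any ring with involution these two relations yield the Bogoliubov identities
`pᵗ p - qᵗ q = 1` and `pᵗ q = qᵗ p`. The first makes `p` injective, hence invertible in finite
dimension. Conjugating by `p⁻¹`, the second says that `T = q p⁻¹` is symmetric and the first that
`1 - Tᵗ T = (p⁻¹)ᵗ p⁻¹ = (p pᵗ)⁻¹`. Positivity follows, as `⟪v, (1 - T²) v⟫ = ‖p⁻¹ v‖²` and
`⟪v, T² v⟫ = ‖T v‖²`.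
-/

open scoped RealInnerProductSpace

section Sandwich

variable {A : Type*} [Ring A] {J g h : A}

theorem self_mul_sandwich (hJ2 : J * J = -1) : J * (J * g * J) = -(g * J) := by
  rw [mul_assoc, ← mul_assoc, hJ2, neg_one_mul]

theorem sandwich_mul_self (hJ2 : J * J = -1) : J * g * J * J = -(J * g) := by
  rw [mul_assoc, hJ2, mul_neg_one]

theorem mul_sandwich_eq_neg_one (hJ2 : J * J = -1) (hg : h * J * g = J) :
    h * (J * g * J) = -1 := by
  rw [← mul_assoc, ← mul_assoc, hg, hJ2]

theorem sandwich_mul_eq_neg_one (hJ2 : J * J = -1) (hg : h * J * g = J) :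
    J * h * J * g = -1 := by
  rw [mul_assoc J, mul_assoc, hg, hJ2]

end Sandwich

section Parts

variable (𝕜 : Type*) {A : Type*} [Field 𝕜] [Ring A] [Algebra 𝕜 A]

/-- The complex-linear part `½ (g - J g J)` of `g`, where `J` is a complex structure: the component
of `g` that commutes with `J`. It is `p_g` in the Bogoliubov decomposition `g = p_g + q_g`. -/
def linearPart (J g : A) : A := (2⁻¹ : 𝕜) • (g - J * g * J)

/-- The antilinear part `½ (g + J g J)` of `g`, where `J` is a complex structure: the component of
`g` that anticommutes with `J`. It is `q_g` in the Bogoliubov decomposition `g = p_g + q_g`. -/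
def antilinearPart (J g : A) : A := (2⁻¹ : 𝕜) • (g + J * g * J)

variable {J : A}

theorem commute_linearPart (hJ2 : J * J = -1) (g : A) : Commute (linearPart 𝕜 J g) J := by
  rw [commute_iff_eq, linearPart, smul_mul_assoc, mul_smul_comm, sub_mul, mul_sub,
    sandwich_mul_self hJ2, self_mul_sandwich hJ2]
  module

theorem semiconjBy_antilinearPart (hJ2 : J * J = -1) (g : A) :
    SemiconjBy (antilinearPart 𝕜 J g) J (-J) := by
  rw [SemiconjBy, antilinearPart, smul_mul_assoc, neg_mul, mul_smul_comm, add_mul, mul_add,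
    sandwich_mul_self hJ2, self_mul_sandwich hJ2]
  module

variable [StarRing 𝕜] [StarRing A] [StarModule 𝕜 A]

theorem star_linearPart (hJ : star J = -J) (g : A) :
    star (linearPart 𝕜 J g) = linearPart 𝕜 J (star g) := by
  simp [linearPart, hJ, mul_assoc]

theorem star_antilinearPart (hJ : star J = -J) (g : A) :
    star (antilinearPart 𝕜 J g) = antilinearPart 𝕜 J (star g) := by
  simp [antilinearPart, hJ, mul_assoc]

variable {g : A}

theorem star_linearPart_mul_self_sub [NeZero (2 : 𝕜)] (hJ2 : J * J = -1) (hJ : star J = -J)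
    (hg : star g * J * g = J) :
    star (linearPart 𝕜 J g) * linearPart 𝕜 J g
      - star (antilinearPart 𝕜 J g) * antilinearPart 𝕜 J g = 1 := by
  have h2 : (2 : 𝕜) ≠ 0 := two_ne_zero
  rw [star_linearPart 𝕜 hJ, star_antilinearPart 𝕜 hJ]
  simp only [linearPart, antilinearPart, smul_mul_smul_comm, mul_sub, sub_mul, mul_add, add_mul,
    mul_sandwich_eq_neg_one hJ2 hg, sandwich_mul_eq_neg_one hJ2 hg]
  match_scalars <;> field_simp <;> ring

theorem isSelfAdjoint_star_linearPart_mul_antilinearPart (hJ2 : J * J = -1) (hJ : star J = -J)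
    (hg : star g * J * g = J) :
    IsSelfAdjoint (star (linearPart 𝕜 J g) * antilinearPart 𝕜 J g) := by
  rw [IsSelfAdjoint, star_mul, star_star, star_linearPart 𝕜 hJ, star_antilinearPart 𝕜 hJ]
  simp only [linearPart, antilinearPart, smul_mul_smul_comm, mul_sub, sub_mul, mul_add, add_mul,
    mul_sandwich_eq_neg_one hJ2 hg, sandwich_mul_eq_neg_one hJ2 hg]
  module

end Parts

theorem semiconjBy_mul_ringInverse {M : Type*} [MonoidWithZero M] {p q a b c : M}
    (hp : IsUnit p) (hpab : SemiconjBy p a b) (hqac : SemiconjBy q a c) :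
    SemiconjBy (q * Ring.inverse p) b c := by
  obtain ⟨u, rfl⟩ := hp
  rw [Ring.inverse_unit]
  exact hqac.mul_left hpab.units_inv_symm_left

section StarRing

variable {A : Type*} [Semiring A] [StarRing A] {p q : A}

theorem isSelfAdjoint_mul_ringInverse (hp : IsUnit p) (hpq : IsSelfAdjoint (star p * q)) :
    IsSelfAdjoint (q * Ring.inverse p) := by
  have hconj : star (Ring.inverse p) * (star p * q) * Ring.inverse p = q * Ring.inverse p := by
    rw [← mul_assoc, ← star_mul, Ring.mul_inverse_cancel p hp, star_one, one_mul]
  exact hconj ▸ hpq.conjugate' (Ring.inverse p)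

theorem ringInverse_mul_star_self (hp : IsUnit p) :
    Ring.inverse (p * star p) = star (Ring.inverse p) * Ring.inverse p := by
  rw [Ring.inverse_mul (.inl hp), Ring.inverse_star]

end StarRing

theorem one_sub_star_mul_self_mul_ringInverse {A : Type*} [Ring A] [StarRing A] {p q : A}
    (hp : IsUnit p) (hpq : star p * p - star q * q = 1) :
    1 - star (q * Ring.inverse p) * (q * Ring.inverse p) = Ring.inverse (p * star p) := by
  set P := Ring.inverse p
  have hpP : p * P = 1 := Ring.mul_inverse_cancel p hp
  have hone : star P * (star p * p) * P = 1 := by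
    rw [← mul_assoc, ← star_mul, hpP, star_one, one_mul, hpP]
  calc 1 - star (q * P) * (q * P)
      = star P * (star p * p - star q * q) * P := by
        rw [mul_sub, sub_mul, hone, star_mul]
        simp only [mul_assoc]
    _ = Ring.inverse (p * star p) := by
        rw [hpq, mul_one, ringInverse_mul_star_self hp]

section InnerProductSpace

variable {𝕜 E : Type*} [RCLike 𝕜] [NormedAddCommGroup E] [InnerProductSpace 𝕜 E]
  [FiniteDimensional 𝕜 E]

theorem star_mul_mul_eq_iff_inner {f B C : Module.End 𝕜 E} :
    star f * B * f = C ↔ ∀ u v, inner 𝕜 (B (f u)) (f v) = inner 𝕜 (C u) v := by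
  rw [LinearMap.ext_iff]
  refine forall_congr' fun u ↦ ?_
  rw [ext_iff_inner_right 𝕜]
  simp only [Module.End.mul_apply, LinearMap.star_eq_adjoint, LinearMap.adjoint_inner_left]

theorem star_eq_neg_of_inner_map_map {J : Module.End 𝕜 E} (hJ2 : J * J = -1)
    (hJ : ∀ u v, inner 𝕜 (J u) (J v) = inner 𝕜 u v) : star J = -J := by
  have hstar : star J * J = 1 := by
    simpa using star_mul_mul_eq_iff_inner (B := 1) (C := 1).mpr hJ
  calc star J = star J * -(J * J) := by rw [hJ2, neg_neg, mul_one]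
    _ = -J := by rw [mul_neg, ← mul_assoc, hstar, one_mul]

theorem re_inner_star_mul_self_apply (f : Module.End 𝕜 E) (x : E) :
    RCLike.re (inner 𝕜 x ((star f * f) x)) = ‖f x‖ ^ 2 := by
  rw [Module.End.mul_apply, LinearMap.star_eq_adjoint, LinearMap.adjoint_inner_right,
    inner_self_eq_norm_sq]

theorem isUnit_of_star_mul_self_sub_eq_one {p q : Module.End 𝕜 E}
    (hpq : star p * p - star q * q = 1) : IsUnit p := by
  have hnorm (x : E) : ‖p x‖ ^ 2 - ‖q x‖ ^ 2 = ‖x‖ ^ 2 := by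
    rw [← re_inner_star_mul_self_apply p, ← re_inner_star_mul_self_apply q, ← map_sub,
      ← inner_sub_right, ← LinearMap.sub_apply, hpq, Module.End.one_apply, inner_self_eq_norm_sq]
  rw [LinearMap.isUnit_iff_ker_eq_bot, LinearMap.ker_eq_bot']
  intro x hx
  have hle : ‖x‖ ^ 2 ≤ 0 := by
    rw [← hnorm, hx, norm_zero]
    linarith [sq_nonneg ‖q x‖]
  exact norm_eq_zero.mp ((sq_nonpos_iff _).mp hle)

theorem re_inner_ringInverse_mul_star_self_pos {p : Module.End 𝕜 E} (hp : IsUnit p) {x : E}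
    (hx : x ≠ 0) : 0 < RCLike.re (inner 𝕜 x (Ring.inverse (p * star p) x)) := by
  have hne : Ring.inverse p x ≠ 0 := fun h ↦ hx <| by
    simpa [h] using (LinearMap.congr_fun (Ring.mul_inverse_cancel p hp) x).symm
  rw [ringInverse_mul_star_self hp, re_inner_star_mul_self_apply]
  positivity

end InnerProductSpace

/-- For every `g ∈ Sp(V)`, the operator `T_g := q_g∘p_g⁻¹` satisfies:
`T_g∘J = −J∘T_g` (antilinearity), `T_gᵗ = T_g` (symmetry),
`1 − T_g² = (p_g∘p_gᵗ)⁻¹`, and `0 < 1 − T_g² ≤ 1` (i.e., `1 − T_g²` is positive definite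
and `T_g²` is positive semidefinite). -/
theorem stmt_4 {V : Type*} [NormedAddCommGroup V] [InnerProductSpace ℝ V]
    [FiniteDimensional ℝ V] (m : ℕ) (hdim : Module.finrank ℝ V = 2 * m)
    (J : Module.End ℝ V) (hJ2 : J * J = -1)
    (hJd : ∀ u v : V, ⟪J u, J v⟫ = ⟪u, v⟫)
    (g : Module.End ℝ V) (hg : IsUnit g)
    (hgs : ∀ u v : V, ⟪J (g u), g v⟫ = ⟪J u, v⟫)
    (p q T : Module.End ℝ V)
    (hp : p = (2⁻¹ : ℝ) • (g - J * g * J))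
    (hq : q = (2⁻¹ : ℝ) • (g + J * g * J))
    (hT : T = q * Ring.inverse p) :
    T * J = -(J * T) ∧
    LinearMap.adjoint T = T ∧
    1 - T * T = Ring.inverse (p * LinearMap.adjoint p) ∧
    (∀ v : V, v ≠ 0 → 0 < ⟪v, (1 - T * T) v⟫) ∧
    (∀ v : V, 0 ≤ ⟪v, (T * T) v⟫) := by
  obtain rfl : p = linearPart ℝ J g := hp
  obtain rfl : q = antilinearPart ℝ J g := hq
  have hJ : star J = -J := star_eq_neg_of_inner_map_map hJ2 hJd
  have hgJ : star g * J * g = J := star_mul_mul_eq_iff_inner.mpr hgs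
  have hpq := star_linearPart_mul_self_sub ℝ hJ2 hJ hgJ
  have hpu : IsUnit (linearPart ℝ J g) := isUnit_of_star_mul_self_sub_eq_one hpq
  have hTJ : SemiconjBy T J (-J) := hT ▸
    semiconjBy_mul_ringInverse hpu (commute_linearPart ℝ hJ2 g) (semiconjBy_antilinearPart ℝ hJ2 g)
  have hTadj : star T = T := hT ▸ isSelfAdjoint_mul_ringInverse hpu
    (isSelfAdjoint_star_linearPart_mul_antilinearPart ℝ hJ2 hJ hgJ)
  have hTT : 1 - T * T = Ring.inverse (linearPart ℝ J g * star (linearPart ℝ J g)) := by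
    simpa only [← hT, hTadj] using one_sub_star_mul_self_mul_ringInverse hpu hpq
  refine ⟨by simpa using hTJ.eq, hTadj, hTT, fun v hv ↦ ?_, fun v ↦ ?_⟩
  · rw [hTT]
    exact re_inner_ringInverse_mul_star_self_pos hpu hv
  · have hnonneg := LinearMap.re_inner_adjoint_mul_self_nonneg T v
    rwa [← LinearMap.star_eq_adjoint, hTadj] at hnonneg
end

section
/- For all g, h ∈ O(V) such that p_g, p_h and p_{gh} are invertible: p_{gh} = p_g ∘ (1 − T̂_g∘T_h) ∘ p_h; in particular 1 − T̂_g∘T_h is invertible, and T_{gh} = T_g + (p_gᵗ)⁻¹ ∘ T_h ∘ (1 − T̂_g∘T_h)⁻¹ ∘ p_g⁻¹. -/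
open scoped RealInnerProductSpace

/-!
Let `p_g` and `q_g` be the parts of `g` commuting and anticommuting with `J`, and `T_g = q_g p_g⁻¹`.
Sorting `g h = (p_g + q_g) (p_h + q_h)` by type gives `p_{gh} = p_g p_h + q_g q_h` and
`q_{gh} = p_g q_h + q_g p_h`. Let `k = g⁻¹`. The antilinear part of `g k = 1` says
`p_g T_k = -q_g`, which turns the first identity into `p_{gh} = p_g (1 - T_k T_h) p_h`. The
antilinear part of `k (g h) = h` is `p_k q_{gh} + q_k p_{gh} = q_h`; since likewise
`q_k = -p_k T_g`, dividing by `p_k` on the left and by `p_{gh}` on the right yields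
`T_{gh} = T_g + p_k⁻¹ q_h p_{gh}⁻¹`. For orthogonal `g` and `J`, moreover, `p_k = p_gᵗ`.
-/

open scoped Ring

lemma conj_mul_conj_eq_neg {A : Type*} [Ring A] {J : A} (hJ : J * J = -1) (g h : A) :
    J * g * J * (J * h * J) = -(J * (g * h) * J) := by
  calc J * g * J * (J * h * J) = J * g * (J * J) * h * J := by noncomm_ring
    _ = -(J * (g * h) * J) := by rw [hJ]; noncomm_ring

section Parts

variable (R : Type*) {A : Type*} [CommRing R] [Invertible (2 : R)] [Ring A] [Algebra R A]

/-- The `J`-linear part `p_g` of `g`: the component of `g` commuting with the complex structure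
`J`. -/
def linPart (J g : A) : A := (⅟2 : R) • (g - J * g * J)

/-- The `J`-antilinear part `q_g` of `g`: the component of `g` anticommuting with the complex
structure `J`. -/
def antilinPart (J g : A) : A := (⅟2 : R) • (g + J * g * J)

/-- The quotient `T_g = q_g * p_g⁻¹` of the antilinear by the linear part of `g`, which describes
`g` up to right multiplication by invertible `J`-linear elements. As `Ring.inverse` is used, it is
`0` when the linear part is not invertible. -/
noncomputable def antilinRatio (J g : A) : A := antilinPart R J g * (linPart R J g)⁻¹ʳ

variable {J g h k : A}

lemma linPart_mul (hJ : J * J = -1) (g h : A) :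
    linPart R J (g * h) =
      linPart R J g * linPart R J h + antilinPart R J g * antilinPart R J h := by
  have expand : (g - J * g * J) * (h - J * h * J) + (g + J * g * J) * (h + J * h * J) =
      (2 : R) • (g * h - J * (g * h) * J) := by
    rw [ofNat_smul_eq_nsmul, two_nsmul, sub_eq_add_neg (g * h), ← conj_mul_conj_eq_neg hJ]
    noncomm_ring
  simp only [linPart, antilinPart, smul_mul_smul_comm]
  rw [← smul_add, expand, mul_smul, invOf_smul_smul]

lemma antilinPart_mul (hJ : J * J = -1) (g h : A) :
    antilinPart R J (g * h) =
      linPart R J g * antilinPart R J h + antilinPart R J g * linPart R J h := by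
  have expand : (g - J * g * J) * (h + J * h * J) + (g + J * g * J) * (h - J * h * J) =
      (2 : R) • (g * h + J * (g * h) * J) := by
    rw [ofNat_smul_eq_nsmul, two_nsmul, ← neg_neg (J * (g * h) * J), ← conj_mul_conj_eq_neg hJ]
    noncomm_ring
  simp only [linPart, antilinPart, smul_mul_smul_comm]
  rw [← smul_add, expand, mul_smul, invOf_smul_smul]

lemma antilinPart_one (hJ : J * J = -1) : antilinPart R J 1 = 0 := by
  rw [antilinPart, mul_one, hJ, add_neg_cancel, smul_zero]

lemma star_linPart [StarRing R] [StarRing A] [StarModule R A] (hJ : star J = -J) (g : A) :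
    star (linPart R J g) = linPart R J (star g) := by
  simp [linPart, star_invOf, hJ, mul_assoc]

variable {R}

lemma antilinRatio_mul_linPart (hg : IsUnit (linPart R J g)) :
    antilinRatio R J g * linPart R J g = antilinPart R J g :=
  Ring.inverse_mul_cancel_right _ _ hg

lemma linPart_mul_antilinRatio (hJ : J * J = -1) (hgk : g * k = 1)
    (hk : IsUnit (linPart R J k)) :
    linPart R J g * antilinRatio R J k = -antilinPart R J g := by
  have antilin_gk : linPart R J g * antilinPart R J k + antilinPart R J g * linPart R J k = 0 := by
    rw [← antilinPart_mul R hJ, hgk, antilinPart_one R hJ]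
  rw [antilinRatio, ← mul_assoc, eq_neg_of_add_eq_zero_left antilin_gk, neg_mul,
    Ring.mul_inverse_cancel_right _ _ hk]

lemma linPart_mul_eq_mul_one_sub_mul (hJ : J * J = -1) (hgk : g * k = 1)
    (hk : IsUnit (linPart R J k)) (hh : IsUnit (linPart R J h)) :
    linPart R J (g * h) =
      linPart R J g * (1 - antilinRatio R J k * antilinRatio R J h) * linPart R J h := by
  calc linPart R J (g * h)
      = linPart R J g * linPart R J h
          - linPart R J g * antilinRatio R J k * (antilinRatio R J h * linPart R J h) := by
        rw [linPart_mul_antilinRatio hJ hgk hk, antilinRatio_mul_linPart hh, linPart_mul R hJ,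
          neg_mul, sub_neg_eq_add]
    _ = _ := by noncomm_ring

lemma isUnit_one_sub_antilinRatio_mul_antilinRatio_iff (hJ : J * J = -1) (hgk : g * k = 1)
    (hg : IsUnit (linPart R J g)) (hk : IsUnit (linPart R J k)) (hh : IsUnit (linPart R J h)) :
    IsUnit (1 - antilinRatio R J k * antilinRatio R J h) ↔ IsUnit (linPart R J (g * h)) := by
  rw [linPart_mul_eq_mul_one_sub_mul hJ hgk hk hh, hh.mul_right_iff, hg.mul_left_iff]

lemma antilinRatio_mul_eq_add_antilinPart (hJ : J * J = -1) (hkg : k * g = 1)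
    (hg : IsUnit (linPart R J g)) (hk : IsUnit (linPart R J k))
    (hgh : IsUnit (linPart R J (g * h))) :
    antilinRatio R J (g * h) = antilinRatio R J g +
      (linPart R J k)⁻¹ʳ * antilinPart R J h * (linPart R J (g * h))⁻¹ʳ := by
  have antilin_kgh : linPart R J k * antilinPart R J (g * h) +
      antilinPart R J k * linPart R J (g * h) = antilinPart R J h := by
    rw [← antilinPart_mul R hJ, ← mul_assoc, hkg, one_mul]
  have antilin_gh : antilinPart R J (g * h) =
      antilinRatio R J g * linPart R J (g * h) + (linPart R J k)⁻¹ʳ * antilinPart R J h := by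
    apply hk.mul_left_cancel
    rw [mul_add, ← mul_assoc, linPart_mul_antilinRatio hJ hkg hg,
      Ring.mul_inverse_cancel_left _ _ hk, ← antilin_kgh]
    noncomm_ring
  rw [antilinRatio, antilin_gh, add_mul, Ring.mul_inverse_cancel_right _ _ hgh]

lemma antilinRatio_mul (hJ : J * J = -1) (hgk : g * k = 1) (hkg : k * g = 1)
    (hg : IsUnit (linPart R J g)) (hk : IsUnit (linPart R J k)) (hh : IsUnit (linPart R J h))
    (hgh : IsUnit (linPart R J (g * h))) :
    antilinRatio R J (g * h) = antilinRatio R J g + (linPart R J k)⁻¹ʳ * antilinRatio R J h *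
      (1 - antilinRatio R J k * antilinRatio R J h)⁻¹ʳ * (linPart R J g)⁻¹ʳ := by
  have hunit := (isUnit_one_sub_antilinRatio_mul_antilinRatio_iff hJ hgk hg hk hh).mpr hgh
  have hinv : antilinRatio R J h * (1 - antilinRatio R J k * antilinRatio R J h)⁻¹ʳ *
      (linPart R J g)⁻¹ʳ = antilinPart R J h * (linPart R J (g * h))⁻¹ʳ := by
    rw [Ring.eq_mul_inverse_iff_mul_eq _ _ _ hgh,
      linPart_mul_eq_mul_one_sub_mul hJ hgk hk hh, ← mul_assoc, ← mul_assoc,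
      Ring.inverse_mul_cancel_right _ _ hg, Ring.inverse_mul_cancel_right _ _ hunit,
      antilinRatio_mul_linPart hh]
  rw [antilinRatio_mul_eq_add_antilinPart hJ hkg hg hk hgh, mul_assoc, ← hinv]
  simp only [mul_assoc]

end Parts

lemma adjoint_eq_neg_of_mul_self_eq_neg_one {𝕜 V : Type*} [RCLike 𝕜] [NormedAddCommGroup V]
    [InnerProductSpace 𝕜 V] [FiniteDimensional 𝕜 V] {J : Module.End 𝕜 V} (hJ : J * J = -1)
    (hJd : ∀ u v : V, inner 𝕜 (J u) (J v) = inner 𝕜 u v) : LinearMap.adjoint J = -J := by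
  have adjoint_mul_self : LinearMap.adjoint J * J = 1 :=
    (J.isometryOfInner hJd).adjoint_comp_self'
  exact left_inv_eq_right_inv adjoint_mul_self (by rw [mul_neg, hJ, neg_neg])

theorem stmt_7_general (R : Type*) {A : Type*} [CommRing R] [StarRing R] [Invertible (2 : R)]
    [Ring A] [StarRing A] [Algebra R A] [StarModule R A] {J g h : A}
    (hJ : J * J = -1) (hJstar : star J = -J) (hgu : g ∈ unitary A)
    (hg : IsUnit (linPart R J g)) (hh : IsUnit (linPart R J h))
    (hgh : IsUnit (linPart R J (g * h))) :
    linPart R J (g * h) =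
      linPart R J g * (1 - antilinRatio R J g⁻¹ʳ * antilinRatio R J h) * linPart R J h ∧
    IsUnit (1 - antilinRatio R J g⁻¹ʳ * antilinRatio R J h) ∧
    antilinRatio R J (g * h) = antilinRatio R J g +
      (star (linPart R J g))⁻¹ʳ * antilinRatio R J h *
        (1 - antilinRatio R J g⁻¹ʳ * antilinRatio R J h)⁻¹ʳ * (linPart R J g)⁻¹ʳ := by
  obtain ⟨hkg, hgk⟩ := Unitary.mem_iff.mp hgu
  have hinv : g⁻¹ʳ = star g := Ring.inverse_unit ⟨g, star g, hgk, hkg⟩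
  have hstar : star (linPart R J g) = linPart R J (star g) := star_linPart R hJstar g
  have hk : IsUnit (linPart R J (star g)) := hstar ▸ hg.star
  rw [hinv, hstar]
  exact ⟨linPart_mul_eq_mul_one_sub_mul hJ hgk hk hh,
    (isUnit_one_sub_antilinRatio_mul_antilinRatio_iff hJ hgk hg hk hh).mpr hgh,
    antilinRatio_mul hJ hgk hkg hg hk hh hgh⟩

/-- For all `g, h ∈ O(V)` such that `p_g`, `p_h` and `p_{gh}` are
invertible: `p_{gh} = p_g ∘ (1 − T̂_g∘T_h) ∘ p_h`; in particular `1 − T̂_g∘T_h` is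
invertible, and `T_{gh} = T_g + (p_gᵗ)⁻¹ ∘ T_h ∘ (1 − T̂_g∘T_h)⁻¹ ∘ p_g⁻¹`. -/
theorem stmt_7 {V : Type*} [NormedAddCommGroup V] [InnerProductSpace ℝ V]
    [FiniteDimensional ℝ V] (m : ℕ) (hdim : Module.finrank ℝ V = 2 * m)
    (J : Module.End ℝ V) (hJ2 : J * J = -1)
    (hJd : ∀ u v : V, ⟪J u, J v⟫ = ⟪u, v⟫)
    (g h : Module.End ℝ V)
    (hgo : LinearMap.adjoint g * g = 1)
    (hho : LinearMap.adjoint h * h = 1)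
    (pg qg ph qh pgh qgh pg' qg' Tg Th Tgh Tghat : Module.End ℝ V)
    (hpg : pg = (2⁻¹ : ℝ) • (g - J * g * J))
    (hqg : qg = (2⁻¹ : ℝ) • (g + J * g * J))
    (hph : ph = (2⁻¹ : ℝ) • (h - J * h * J))
    (hqh : qh = (2⁻¹ : ℝ) • (h + J * h * J))
    (hpgh : pgh = (2⁻¹ : ℝ) • (g * h - J * (g * h) * J))
    (hqgh : qgh = (2⁻¹ : ℝ) • (g * h + J * (g * h) * J))
    (hpgu : IsUnit pg) (hphu : IsUnit ph) (hpghu : IsUnit pgh)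
    (hpg' : pg' = (2⁻¹ : ℝ) • (Ring.inverse g - J * Ring.inverse g * J))
    (hqg' : qg' = (2⁻¹ : ℝ) • (Ring.inverse g + J * Ring.inverse g * J))
    (hTg : Tg = qg * Ring.inverse pg)
    (hTh : Th = qh * Ring.inverse ph)
    (hTgh : Tgh = qgh * Ring.inverse pgh)
    (hThat : Tghat = qg' * Ring.inverse pg') :
    pgh = pg * (1 - Tghat * Th) * ph ∧
    IsUnit (1 - Tghat * Th) ∧
    Tgh = Tg + Ring.inverse (LinearMap.adjoint pg) * Th *
      Ring.inverse (1 - Tghat * Th) * Ring.inverse pg := by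
  subst_vars
  exact stmt_7_general ℝ hJ2 (adjoint_eq_neg_of_mul_self_eq_neg_one hJ2 hJd)
    ⟨hgo, mul_eq_one_comm.mp hgo⟩ hpgu hphu hpghu
end

section
/- Let S, T : V → V be ℝ-linear maps with S∘J = −J∘S, T∘J = −J∘T, Sᵗ = S, Tᵗ = T, and with 1 − S² and 1 − T² positive definite. Then d(v, (1 − T∘S)v) > 0 for every v ≠ 0, and the ℝ-linear operator 1 − T∘S is invertible. -/
open scoped RealInnerProductSpace

/-!
Write `Sᵗ`, `Tᵗ` for the adjoints. Positivity of `1 - Sᵗ S` says exactly that `S` strictly shrinks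
the norm of every nonzero vector, and positivity of `1 - T Tᵗ` says the same of `Tᵗ`. By
Cauchy–Schwarz, `re ⟪v, T S v⟫ = re ⟪Tᵗ v, S v⟫ ≤ ‖Tᵗ v‖ ‖S v‖ < ‖v‖²` for `v ≠ 0`, so
`re ⟪v, (1 - T S) v⟫ > 0`. In particular `1 - T S` is injective, hence invertible in finite
dimension.
-/

section

open scoped InnerProductSpace
open RCLike

variable {𝕜 V W : Type*} [RCLike 𝕜]
  [SeminormedAddCommGroup V] [InnerProductSpace 𝕜 V]
  [SeminormedAddCommGroup W] [InnerProductSpace 𝕜 W]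

theorem re_inner_one_sub_apply (A : Module.End 𝕜 V) (v : V) :
    re ⟪v, (1 - A) v⟫_𝕜 = ‖v‖ ^ 2 - re ⟪v, A v⟫_𝕜 := by
  rw [LinearMap.sub_apply, Module.End.one_apply, inner_sub_right, map_sub, inner_self_eq_norm_sq]

theorem re_inner_one_sub_comp_pos_iff_norm_lt {A : V →ₗ[𝕜] W} {B : W →ₗ[𝕜] V}
    (hAB : ∀ v w, ⟪A v, w⟫_𝕜 = ⟪v, B w⟫_𝕜) (v : V) :
    0 < re ⟪v, (1 - B ∘ₗ A) v⟫_𝕜 ↔ ‖A v‖ < ‖v‖ := by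
  rw [re_inner_one_sub_apply, LinearMap.comp_apply, ← hAB, inner_self_eq_norm_sq, sub_pos,
    sq_lt_sq₀ (norm_nonneg _) (norm_nonneg _)]

theorem re_inner_one_sub_comp_pos_of_norm_lt {S A : V →ₗ[𝕜] W} {B : W →ₗ[𝕜] V}
    (hAB : ∀ v w, ⟪A v, w⟫_𝕜 = ⟪v, B w⟫_𝕜) {v : V} (hS : ‖S v‖ < ‖v‖) (hA : ‖A v‖ < ‖v‖) :
    0 < re ⟪v, (1 - B ∘ₗ S) v⟫_𝕜 := by
  rw [re_inner_one_sub_apply, LinearMap.comp_apply, ← hAB, sub_pos]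
  calc re ⟪A v, S v⟫_𝕜 ≤ ‖A v‖ * ‖S v‖ := re_inner_le_norm _ _
    _ < ‖v‖ * ‖v‖ := mul_lt_mul'' hA hS (norm_nonneg _) (norm_nonneg _)
    _ = ‖v‖ ^ 2 := (sq _).symm

theorem isUnit_of_forall_inner_apply_ne_zero [FiniteDimensional 𝕜 V] {A : Module.End 𝕜 V}
    (hA : ∀ v, v ≠ 0 → ⟪v, A v⟫_𝕜 ≠ 0) : IsUnit A := by
  rw [LinearMap.isUnit_iff_ker_eq_bot, LinearMap.ker_eq_bot']
  intro v hv
  by_contra hne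
  exact hA v hne (by rw [hv, inner_zero_right])

theorem stmt_8_general [FiniteDimensional 𝕜 V] {S Tadj : V →ₗ[𝕜] W} {T Sadj : W →ₗ[𝕜] V}
    (hS : ∀ v w, ⟪S v, w⟫_𝕜 = ⟪v, Sadj w⟫_𝕜) (hT : ∀ v w, ⟪Tadj v, w⟫_𝕜 = ⟪v, T w⟫_𝕜)
    (hSpos : ∀ v, v ≠ 0 → 0 < re ⟪v, (1 - Sadj ∘ₗ S) v⟫_𝕜)
    (hTpos : ∀ v, v ≠ 0 → 0 < re ⟪v, (1 - T ∘ₗ Tadj) v⟫_𝕜) :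
    (∀ v, v ≠ 0 → 0 < re ⟪v, (1 - T ∘ₗ S) v⟫_𝕜) ∧ IsUnit (1 - T ∘ₗ S : Module.End 𝕜 V) := by
  have hpos : ∀ v, v ≠ 0 → 0 < re ⟪v, (1 - T ∘ₗ S) v⟫_𝕜 := fun v hv =>
    re_inner_one_sub_comp_pos_of_norm_lt hT
      ((re_inner_one_sub_comp_pos_iff_norm_lt hS v).1 (hSpos v hv))
      ((re_inner_one_sub_comp_pos_iff_norm_lt hT v).1 (hTpos v hv))
  refine ⟨hpos, isUnit_of_forall_inner_apply_ne_zero fun v hv hzero => ?_⟩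
  exact (hpos v hv).ne' (by rw [hzero, map_zero])

end

/-- Let `S, T : V → V` be ℝ-linear maps with `S∘J = −J∘S`,
`T∘J = −J∘T`, `Sᵗ = S`, `Tᵗ = T`, and with `1 − S²` and `1 − T²` positive definite.
Then `d(v, (1 − T∘S)v) > 0` for every `v ≠ 0`, and the ℝ-linear operator `1 − T∘S`
is invertible. -/
theorem stmt_8 {V : Type*} [NormedAddCommGroup V] [InnerProductSpace ℝ V]
    [FiniteDimensional ℝ V] (m : ℕ) (hdim : Module.finrank ℝ V = 2 * m)
    (J : Module.End ℝ V) (hJ2 : J * J = -1)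
    (hJd : ∀ u v : V, ⟪J u, J v⟫ = ⟪u, v⟫)
    (S T : Module.End ℝ V)
    (hSJ : S * J = -(J * S)) (hTJ : T * J = -(J * T))
    (hSsym : LinearMap.adjoint S = S) (hTsym : LinearMap.adjoint T = T)
    (hSpos : ∀ v : V, v ≠ 0 → 0 < ⟪v, (1 - S * S) v⟫)
    (hTpos : ∀ v : V, v ≠ 0 → 0 < ⟪v, (1 - T * T) v⟫) :
    (∀ v : V, v ≠ 0 → 0 < ⟪v, (1 - T * S) v⟫) ∧
    IsUnit (1 - T * S) :=
  stmt_8_general ((LinearMap.eq_adjoint_iff S S).1 hSsym.symm)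
    ((LinearMap.eq_adjoint_iff T T).1 hTsym.symm) hSpos hTpos
end

section
/- Let B be a symmetric m×m complex matrix (Bᵀ = B) whose real part Re B is positive definite, and let c ∈ ℂᵐ. Then B is invertible, the integral I := ∫_{ℝᵐ} exp(−½ xᵀBx + cᵀx) dx (with dx equal to (2π)^{−m/2} times Lebesgue measure) converges, and I² · det B = exp(cᵀB⁻¹c). In particular, when B is real and c = 0, I = (det B)^{−1/2} with the positive square root. -/
open MeasureTheory

/-!
Write `B = A + iC` with `A`, `C` real symmetric and `A` positive definite. A real change of
variables `x = P y` that makes `PᵀAP = 1` and `PᵀCP` diagonal turns the integrand into a product of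
one-dimensional complex Gaussians. The identity `I² det B = exp (cᵀB⁻¹c)` is invariant under such a
congruence: `I` scales by `|det P|⁻¹`, `det B` by `(det P)²`, and `cᵀB⁻¹c` does not change. So it
reduces to dimension one, where squaring removes the choice of the square root of `2π / b`.
For real `B` and `c` the integral is nonnegative, which selects the root.
-/

open Matrix

section ChangeOfVariables

variable {E F : Type*} [NormedAddCommGroup E] [NormedSpace ℝ E] [FiniteDimensional ℝ E]
  [MeasurableSpace E] [BorelSpace E] {L : E →ₗ[ℝ] E}

lemma measurableEmbedding_of_det_ne_zero (hL : LinearMap.det L ≠ 0) : MeasurableEmbedding L :=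
  (L.equivOfDetNeZero hL).toContinuousLinearEquiv.toHomeomorph.measurableEmbedding

variable [NormedAddCommGroup F] (μ : Measure E) [μ.IsAddHaarMeasure]

lemma integrable_comp_linearMap_iff (hL : LinearMap.det L ≠ 0) (f : E → F) :
    Integrable (fun x => f (L x)) μ ↔ Integrable f μ := by
  rw [← Function.comp_def, ← (measurableEmbedding_of_det_ne_zero hL).integrable_map_iff,
    Measure.map_linearMap_addHaar_eq_smul_addHaar μ hL,
    integrable_smul_measure (by simpa using hL) ENNReal.ofReal_ne_top]

lemma integral_comp_linearMap [NormedSpace ℝ F] (hL : LinearMap.det L ≠ 0) (f : E → F) :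
    ∫ x, f (L x) ∂μ = |(LinearMap.det L)⁻¹| • ∫ x, f x ∂μ := by
  rw [← (measurableEmbedding_of_det_ne_zero hL).integral_map,
    Measure.map_linearMap_addHaar_eq_smul_addHaar μ hL, integral_smul_measure,
    ENNReal.toReal_ofReal (abs_nonneg _)]

end ChangeOfVariables

section Diagonalization

variable {n : Type*} [Fintype n] [DecidableEq n]

section RCLike

variable {𝕜 : Type*} [RCLike 𝕜]

open scoped ComplexOrder MatrixOrder in
lemma exists_conjTranspose_mul_mul_eq_one {A : Matrix n n 𝕜} (hA : A.PosDef) :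
    ∃ Q : Matrix n n 𝕜, IsUnit Q ∧ Qᴴ * A * Q = 1 := by
  obtain ⟨S, hS, rfl⟩ :=
    CStarAlgebra.isStrictlyPositive_iff_eq_star_mul_self.mp hA.isStrictlyPositive
  have hSdet : IsUnit S.det := (isUnit_iff_isUnit_det S).mp hS
  refine ⟨S⁻¹, isUnit_nonsing_inv_iff.mpr hS, ?_⟩
  calc S⁻¹ᴴ * (Sᴴ * S) * S⁻¹ = (S * S⁻¹)ᴴ * (S * S⁻¹) := by
        simp only [conjTranspose_mul, Matrix.mul_assoc]
    _ = 1 := by rw [mul_nonsing_inv S hSdet, conjTranspose_one, Matrix.one_mul]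

lemma exists_unitary_conjTranspose_mul_mul_eq_diagonal {C : Matrix n n 𝕜} (hC : C.IsHermitian) :
    ∃ U ∈ unitaryGroup n 𝕜, ∃ d : n → ℝ, Uᴴ * C * U = diagonal (RCLike.ofReal ∘ d) :=
  ⟨_, hC.eigenvectorUnitary.2, hC.eigenvalues, by
    simpa only [Unitary.conjStarAlgAut_star_apply, Unitary.coe_star, star_eq_conjTranspose] using
      hC.conjStarAlgAut_star_eigenvectorUnitary⟩

open scoped ComplexOrder in
lemma exists_simultaneous_diagonalization {A C : Matrix n n 𝕜} (hA : A.PosDef)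
    (hC : C.IsHermitian) :
    ∃ (P : Matrix n n 𝕜) (d : n → ℝ), IsUnit P ∧ Pᴴ * A * P = 1 ∧
      Pᴴ * C * P = diagonal (RCLike.ofReal ∘ d) := by
  obtain ⟨Q, hQ, hQA⟩ := exists_conjTranspose_mul_mul_eq_one hA
  obtain ⟨U, hU, d, hUC⟩ := exists_unitary_conjTranspose_mul_mul_eq_diagonal
    (isHermitian_conjTranspose_mul_mul Q hC)
  have hUU : Uᴴ * U = 1 := mem_unitaryGroup_iff'.mp hU
  have regroup (M : Matrix n n 𝕜) : (Q * U)ᴴ * M * (Q * U) = Uᴴ * (Qᴴ * M * Q) * U := by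
    simp only [conjTranspose_mul, Matrix.mul_assoc]
  refine ⟨Q * U, d, hQ.mul (.of_mul_eq_one_right _ hUU), ?_, ?_⟩
  · rw [regroup, hQA, Matrix.mul_one, hUU]
  · rw [regroup, hUC]

end RCLike

lemma exists_transpose_mul_mul_eq_diagonal {B : Matrix n n ℂ} (hB : B.IsSymm)
    (hRe : (B.map Complex.re).PosDef) :
    ∃ (P : Matrix n n ℝ) (b : n → ℂ), IsUnit P ∧ (∀ i, 0 < (b i).re) ∧
      (P.map Complex.ofReal)ᵀ * B * P.map Complex.ofReal = diagonal b := by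
  have hIm : (B.map Complex.im).IsHermitian := isHermitian_iff_isSymm.mpr (hB.map _)
  obtain ⟨P, d, hP, hPre, hPim⟩ := exists_simultaneous_diagonalization hRe hIm
  rw [conjTranspose_eq_transpose_of_trivial] at hPre hPim
  refine ⟨P, fun i => ⟨1, d i⟩, hP, fun _ => one_pos, ?_⟩
  have re_congr : ((P.map Complex.ofReal)ᵀ * B * P.map Complex.ofReal).map Complex.re =
      Pᵀ * B.map Complex.re * P := by
    ext i j; simp [Matrix.mul_apply]
  have im_congr : ((P.map Complex.ofReal)ᵀ * B * P.map Complex.ofReal).map Complex.im =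
      Pᵀ * B.map Complex.im * P := by
    ext i j; simp [Matrix.mul_apply]
  rw [hPre] at re_congr
  rw [hPim] at im_congr
  ext i j
  refine Complex.ext ((congr_fun₂ re_congr i j).trans ?_) ((congr_fun₂ im_congr i j).trans ?_)
  all_goals obtain rfl | hij := eq_or_ne i j <;> simp [*]

end Diagonalization

section MatrixAlgebra

variable {n R : Type*} [Fintype n]

lemma dotProduct_mulVec_self_eq_sum [NonUnitalCommSemiring R] (A : Matrix n n R) (x : n → R) :
    x ⬝ᵥ A *ᵥ x = ∑ i, ∑ j, A i j * x i * x j := by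
  simp only [dotProduct, mulVec, Finset.mul_sum, mul_left_comm, mul_assoc]

lemma posDef_of_sum_pos {A : Matrix n n ℝ} (hA : A.IsSymm)
    (hpos : ∀ x : n → ℝ, x ≠ 0 → 0 < ∑ i, ∑ j, A i j * x i * x j) : A.PosDef :=
  .of_dotProduct_mulVec_pos (isHermitian_iff_isSymm.mpr hA) fun x hx => by
    simpa only [star_trivial, dotProduct_mulVec_self_eq_sum] using hpos x hx

variable [DecidableEq n]

lemma isUnit_of_isUnit_mul_mul [CommRing R] {A B C : Matrix n n R}
    (h : IsUnit (A * B * C)) : IsUnit B := by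
  rw [isUnit_iff_isUnit_det, det_mul, det_mul] at h
  exact (isUnit_iff_isUnit_det B).mpr (isUnit_of_mul_isUnit_right (isUnit_of_mul_isUnit_left h))

lemma inv_map_of_isUnit {S : Type*} [CommRing R] [CommRing S] (f : R →+* S) {A : Matrix n n R}
    (hA : IsUnit A) : (A.map f)⁻¹ = A⁻¹.map f := by
  refine inv_eq_right_inv ?_
  rw [← Matrix.map_mul, mul_nonsing_inv A ((isUnit_iff_isUnit_det A).mp hA),
    Matrix.map_one f f.map_zero f.map_one]

lemma transpose_mulVec_dotProduct_inv_mulVec [CommRing R] {P : Matrix n n R} (hP : IsUnit P)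
    (B : Matrix n n R) (c : n → R) :
    (Pᵀ *ᵥ c) ⬝ᵥ (Pᵀ * B * P)⁻¹ *ᵥ (Pᵀ *ᵥ c) = c ⬝ᵥ B⁻¹ *ᵥ c := by
  have hPdet : IsUnit P.det := (isUnit_iff_isUnit_det P).mp hP
  have hPTdet : IsUnit Pᵀ.det := by rwa [det_transpose]
  have hinv : P * (Pᵀ * B * P)⁻¹ * Pᵀ = B⁻¹ := by
    rw [Matrix.mul_inv_rev, Matrix.mul_inv_rev, mul_nonsing_inv_cancel_left _ _ hPdet,
      nonsing_inv_mul_cancel_right _ _ hPTdet]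
  rw [mulVec_transpose, ← dotProduct_mulVec, ← mulVec_transpose, mulVec_mulVec, mulVec_mulVec, hinv]

lemma dotProduct_inv_diagonal_mulVec [Field R] {b : n → R} (hb : ∀ i, b i ≠ 0) (c : n → R) :
    c ⬝ᵥ (diagonal b)⁻¹ *ᵥ c = ∑ i, c i ^ 2 / b i := by
  have hinv : (diagonal b)⁻¹ = diagonal b⁻¹ := by
    refine inv_eq_right_inv ?_
    simp [diagonal_mul_diagonal, hb]
  simp only [hinv, dotProduct, mulVec_diagonal, Pi.inv_apply]
  exact Finset.sum_congr rfl fun i _ => by ring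

end MatrixAlgebra

lemma gaussian_factor_sq_mul {b : ℂ} (hb : b ≠ 0) (c : ℂ) :
    ((((2 * Real.pi) ^ (-(1 : ℝ) / 2) : ℝ) : ℂ) *
      ((Real.pi / (b / 2)) ^ (1 / 2 : ℂ) * Complex.exp (c ^ 2 / (4 * (b / 2))))) ^ 2 * b =
      Complex.exp (c ^ 2 / b) := by
  have hnorm : (((2 * Real.pi) ^ (-(1 : ℝ) / 2) : ℝ) : ℂ) ^ 2 = (2 * Real.pi : ℂ)⁻¹ := by
    rw [← Complex.ofReal_pow, ← Real.rpow_mul_natCast (by positivity)]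
    norm_num [Real.rpow_neg_one]
  have hroot : ((Real.pi / (b / 2) : ℂ) ^ (1 / 2 : ℂ)) ^ 2 = Real.pi / (b / 2) := by
    rw [one_div, Complex.cpow_ofNat_inv_pow]
  have hexp : Complex.exp (c ^ 2 / (4 * (b / 2))) ^ 2 = Complex.exp (c ^ 2 / b) := by
    rw [← Complex.exp_nat_mul]
    congr 1
    push_cast
    field_simp
    ring
  rw [mul_pow, mul_pow, hnorm, hroot, hexp]
  field_simp [Real.pi_ne_zero]

lemma eq_rpow_mul_exp_of_sq_mul_eq_exp {I D q : ℝ} (hI : 0 ≤ I) (hD : 0 < D)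
    (h : I ^ 2 * D = Real.exp q) : I = D ^ (-(1 : ℝ) / 2) * Real.exp (2⁻¹ * q) := by
  have hroot : (D ^ (-(1 : ℝ) / 2)) ^ 2 = D⁻¹ := by
    rw [← Real.rpow_mul_natCast hD.le]
    norm_num [Real.rpow_neg_one]
  have hexp : Real.exp (2⁻¹ * q) ^ 2 = Real.exp q := by
    rw [← Real.exp_nat_mul, Nat.cast_ofNat, mul_inv_cancel_left₀ two_ne_zero]
  rw [← pow_left_inj₀ hI (by positivity) two_ne_zero, mul_pow, hroot, hexp, ← h]
  field_simp

section ComplexGaussian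

variable {n : Type*} [Fintype n]

/-- The Gaussian `exp (-½ xᵀBx + cᵀx)` on `ℝⁿ` with complex coefficients. -/
noncomputable def complexGaussian (B : Matrix n n ℂ) (c : n → ℂ) (x : n → ℝ) : ℂ :=
  Complex.exp (-(2⁻¹ : ℂ) * ((Complex.ofReal ∘ x) ⬝ᵥ B *ᵥ (Complex.ofReal ∘ x)) +
    c ⬝ᵥ (Complex.ofReal ∘ x))

/-- The integral of `complexGaussian B c` against `(2π)^(-n/2)` times Lebesgue measure, the
normalization for which the standard Gaussian `B = 1`, `c = 0` has integral `1`. -/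
noncomputable def complexGaussianIntegral (B : Matrix n n ℂ) (c : n → ℂ) : ℂ :=
  (((2 * Real.pi) ^ (-(Fintype.card n : ℝ) / 2) : ℝ) : ℂ) * ∫ x, complexGaussian B c x

lemma complexGaussian_eq_exp_sum (B : Matrix n n ℂ) (c : n → ℂ) :
    complexGaussian B c = fun x => Complex.exp
      (-(2⁻¹ : ℂ) * ∑ i, ∑ j, B i j * (x i : ℂ) * (x j : ℂ) + ∑ i, c i * (x i : ℂ)) :=
  funext fun x => by
    rw [complexGaussian, dotProduct_mulVec_self_eq_sum]
    rfl

lemma complexGaussian_mulVec (B : Matrix n n ℂ) (c : n → ℂ) (P : Matrix n n ℝ) (x : n → ℝ) :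
    complexGaussian B c (P *ᵥ x) =
      complexGaussian ((P.map Complex.ofReal)ᵀ * B * P.map Complex.ofReal)
        ((P.map Complex.ofReal)ᵀ *ᵥ c) x := by
  have hcast : Complex.ofReal ∘ (P *ᵥ x) = P.map Complex.ofReal *ᵥ (Complex.ofReal ∘ x) :=
    funext fun i => Complex.ofRealHom.map_mulVec P x i
  simp only [complexGaussian, hcast]
  congr 2
  · rw [mulVec_mulVec, ← vecMul_transpose, ← dotProduct_mulVec, mulVec_mulVec, Matrix.mul_assoc]
  · rw [dotProduct_mulVec, mulVec_transpose]

lemma complexGaussian_ofReal (A : Matrix n n ℝ) (c : n → ℝ) (x : n → ℝ) :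
    complexGaussian (A.map Complex.ofReal) (Complex.ofReal ∘ c) x =
      (Real.exp (-2⁻¹ * (x ⬝ᵥ A *ᵥ x) + c ⬝ᵥ x) : ℝ) := by
  simp [complexGaussian, dotProduct, mulVec]

lemma complexGaussianIntegral_ofReal (A : Matrix n n ℝ) (c : n → ℝ) :
    complexGaussianIntegral (A.map Complex.ofReal) (Complex.ofReal ∘ c) =
      ((2 * Real.pi) ^ (-(Fintype.card n : ℝ) / 2) *
        ∫ x : n → ℝ, Real.exp (-2⁻¹ * (x ⬝ᵥ A *ᵥ x) + c ⬝ᵥ x) : ℝ) := by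
  simp only [complexGaussianIntegral, complexGaussian_ofReal, integral_complex_ofReal,
    Complex.ofReal_mul]

section Congruence

variable [DecidableEq n] (B : Matrix n n ℂ) (c : n → ℂ) {P : Matrix n n ℝ}

lemma integrable_complexGaussian_congr_iff (hP : IsUnit P) :
    Integrable (complexGaussian ((P.map Complex.ofReal)ᵀ * B * P.map Complex.ofReal)
      ((P.map Complex.ofReal)ᵀ *ᵥ c)) ↔ Integrable (complexGaussian B c) := by
  have hdet : LinearMap.det (toLin' P) ≠ 0 := by
    simpa only [LinearMap.det_toLin'] using ((isUnit_iff_isUnit_det P).mp hP).ne_zero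
  simpa only [toLin'_apply, complexGaussian_mulVec] using
    integrable_comp_linearMap_iff volume hdet (complexGaussian B c)

lemma complexGaussianIntegral_congr (hP : IsUnit P) :
    complexGaussianIntegral ((P.map Complex.ofReal)ᵀ * B * P.map Complex.ofReal)
      ((P.map Complex.ofReal)ᵀ *ᵥ c) = (|P.det⁻¹| : ℝ) * complexGaussianIntegral B c := by
  have hdet : LinearMap.det (toLin' P) ≠ 0 := by
    simpa only [LinearMap.det_toLin'] using ((isUnit_iff_isUnit_det P).mp hP).ne_zero
  have hint := integral_comp_linearMap volume hdet (complexGaussian B c)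
  simp only [toLin'_apply, complexGaussian_mulVec, LinearMap.det_toLin', Complex.real_smul] at hint
  rw [complexGaussianIntegral, hint, complexGaussianIntegral, mul_left_comm]

end Congruence

section Diagonal

variable [DecidableEq n] {b : n → ℂ}

lemma complexGaussian_diagonal (b c : n → ℂ) (x : n → ℝ) :
    complexGaussian (diagonal b) c x =
      Complex.exp (-∑ i, b i / 2 * (x i : ℂ) ^ 2 + ∑ i, c i * x i) := by
  simp only [complexGaussian, dotProduct, mulVec_diagonal, Function.comp_apply, Finset.mul_sum,
    ← Finset.sum_neg_distrib]
  congr 2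
  exact Finset.sum_congr rfl fun i _ => by ring

lemma integrable_complexGaussian_diagonal (hb : ∀ i, 0 < (b i).re) (c : n → ℂ) :
    Integrable (complexGaussian (diagonal b) c) := by
  have hb' (i : n) : 0 < (b i / 2).re := by simpa using hb i
  simpa only [← complexGaussian_diagonal] using
    GaussianFourier.integrable_cexp_neg_sum_mul_add hb' c

lemma complexGaussianIntegral_diagonal (hb : ∀ i, 0 < (b i).re) (c : n → ℂ) :
    complexGaussianIntegral (diagonal b) c =
      ∏ i, (((2 * Real.pi) ^ (-(1 : ℝ) / 2) : ℝ) : ℂ) *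
        ((Real.pi / (b i / 2)) ^ (1 / 2 : ℂ) * Complex.exp (c i ^ 2 / (4 * (b i / 2)))) := by
  have hb' (i : n) : 0 < (b i / 2).re := by simpa using hb i
  have hnorm : (2 * Real.pi) ^ (-(Fintype.card n : ℝ) / 2) =
      ((2 * Real.pi) ^ (-(1 : ℝ) / 2)) ^ Fintype.card n := by
    rw [← Real.rpow_mul_natCast (by positivity)]
    ring_nf
  simp only [complexGaussianIntegral, complexGaussian_diagonal,
    GaussianFourier.integral_cexp_neg_sum_mul_add hb' c, hnorm, Complex.ofReal_pow,
    Finset.prod_mul_distrib, Finset.prod_const, Finset.card_univ]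

lemma complexGaussianIntegral_diagonal_sq_mul_det (hb : ∀ i, 0 < (b i).re) (c : n → ℂ) :
    complexGaussianIntegral (diagonal b) c ^ 2 * (diagonal b).det =
      Complex.exp (c ⬝ᵥ (diagonal b)⁻¹ *ᵥ c) := by
  have hb0 (i : n) : b i ≠ 0 := fun h => by simpa [h] using hb i
  rw [complexGaussianIntegral_diagonal hb, det_diagonal, ← Finset.prod_pow,
    ← Finset.prod_mul_distrib, dotProduct_inv_diagonal_mulVec hb0, Complex.exp_sum]
  exact Finset.prod_congr rfl fun i _ => gaussian_factor_sq_mul (hb0 i) (c i)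

end Diagonal

section PosDefRe

variable {B : Matrix n n ℂ}

lemma integrable_complexGaussian (hB : B.IsSymm) (hRe : (B.map Complex.re).PosDef) (c : n → ℂ) :
    Integrable (complexGaussian B c) := by
  classical
  obtain ⟨P, b, hP, hb, hPB⟩ := exists_transpose_mul_mul_eq_diagonal hB hRe
  rw [← integrable_complexGaussian_congr_iff B c hP, hPB]
  exact integrable_complexGaussian_diagonal hb _

variable [DecidableEq n]

lemma isUnit_of_posDef_re (hB : B.IsSymm) (hRe : (B.map Complex.re).PosDef) : IsUnit B := by
  obtain ⟨P, b, -, hb, hPB⟩ := exists_transpose_mul_mul_eq_diagonal hB hRe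
  have hdiag : IsUnit (diagonal b) := by
    rw [isUnit_diagonal, Pi.isUnit_iff]
    exact fun i => isUnit_iff_ne_zero.mpr fun h => by simpa [h] using hb i
  exact isUnit_of_isUnit_mul_mul (hPB ▸ hdiag)

lemma complexGaussianIntegral_sq_mul_det (hB : B.IsSymm) (hRe : (B.map Complex.re).PosDef)
    (c : n → ℂ) :
    complexGaussianIntegral B c ^ 2 * B.det = Complex.exp (c ⬝ᵥ B⁻¹ *ᵥ c) := by
  obtain ⟨P, b, hP, hb, hPB⟩ := exists_transpose_mul_mul_eq_diagonal hB hRe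
  set R := P.map Complex.ofReal with hR
  have hRdet : R.det = (P.det : ℂ) := (Complex.ofRealHom.map_det P).symm
  have hPdet : P.det ≠ 0 := ((isUnit_iff_isUnit_det P).mp hP).ne_zero
  have hRunit : IsUnit R := hP.map Complex.ofRealHom.mapMatrix
  have habs : ((|P.det⁻¹| : ℝ) : ℂ) ^ 2 * R.det ^ 2 = 1 := by
    rw [hRdet]
    norm_cast
    rw [sq_abs, ← mul_pow, inv_mul_cancel₀ hPdet, one_pow]
  calc complexGaussianIntegral B c ^ 2 * B.det
      = ((|P.det⁻¹| : ℝ) * complexGaussianIntegral B c) ^ 2 * (Rᵀ * B * R).det := by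
        rw [det_mul, det_mul, det_transpose]
        linear_combination -(complexGaussianIntegral B c ^ 2 * B.det) * habs
    _ = Complex.exp ((Rᵀ *ᵥ c) ⬝ᵥ (Rᵀ * B * R)⁻¹ *ᵥ (Rᵀ *ᵥ c)) := by
        rw [← complexGaussianIntegral_congr B c hP, ← hR, hPB]
        exact complexGaussianIntegral_diagonal_sq_mul_det hb _
    _ = Complex.exp (c ⬝ᵥ B⁻¹ *ᵥ c) := by rw [transpose_mulVec_dotProduct_inv_mulVec hRunit]

lemma complexGaussianIntegral_ofReal_of_posDef {A : Matrix n n ℝ} (hA : A.PosDef) (c : n → ℝ) :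
    complexGaussianIntegral (A.map Complex.ofReal) (Complex.ofReal ∘ c) =
      (A.det ^ (-(1 : ℝ) / 2) * Real.exp (2⁻¹ * (c ⬝ᵥ A⁻¹ *ᵥ c)) : ℝ) := by
  have hsymm : (A.map Complex.ofReal).IsSymm := (isHermitian_iff_isSymm.mp hA.isHermitian).map _
  have hre : (A.map Complex.ofReal).map Complex.re = A := by ext; simp
  have hdet : (A.map Complex.ofReal).det = A.det := (Complex.ofRealHom.map_det A).symm
  have hinv : (A.map Complex.ofReal)⁻¹ = A⁻¹.map Complex.ofReal :=
    inv_map_of_isUnit Complex.ofRealHom hA.isUnit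
  have hquad : (Complex.ofReal ∘ c) ⬝ᵥ A⁻¹.map Complex.ofReal *ᵥ (Complex.ofReal ∘ c) =
      (c ⬝ᵥ A⁻¹ *ᵥ c : ℝ) := by
    simp [dotProduct, mulVec]
  have hsq := complexGaussianIntegral_sq_mul_det hsymm (hre.symm ▸ hA) (Complex.ofReal ∘ c)
  rw [complexGaussianIntegral_ofReal, hdet, hinv, hquad] at hsq
  rw [complexGaussianIntegral_ofReal, Complex.ofReal_inj]
  refine eq_rpow_mul_exp_of_sq_mul_eq_exp ?_ hA.det_pos (by exact_mod_cast hsq)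
  exact mul_nonneg (by positivity) (integral_nonneg fun x => (Real.exp_pos _).le)

end PosDefRe

end ComplexGaussian

theorem stmt_13_general {n : Type*} [Fintype n] [DecidableEq n] {B : Matrix n n ℂ}
    (hB : B.IsSymm) (hRe : (B.map Complex.re).PosDef) (c : n → ℂ) :
    IsUnit B ∧ Integrable (complexGaussian B c) ∧
    complexGaussianIntegral B c ^ 2 * B.det = Complex.exp (c ⬝ᵥ B⁻¹ *ᵥ c) ∧
    ((∀ i j, (B i j).im = 0) → (∀ i, (c i).im = 0) →
      complexGaussianIntegral B c = ((B.map Complex.re).det ^ (-(1 : ℝ) / 2) *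
        Real.exp (2⁻¹ * ((Complex.re ∘ c) ⬝ᵥ (B.map Complex.re)⁻¹ *ᵥ (Complex.re ∘ c))) : ℝ)) := by
  refine ⟨isUnit_of_posDef_re hB hRe, integrable_complexGaussian hB hRe c,
    complexGaussianIntegral_sq_mul_det hB hRe c, fun hBim hcim => ?_⟩
  have hBre : (B.map Complex.re).map Complex.ofReal = B := by
    ext i j; exact Complex.ext rfl (hBim i j).symm
  have hcre : Complex.ofReal ∘ Complex.re ∘ c = c :=
    funext fun i => Complex.ext rfl (hcim i).symm
  simpa only [hBre, hcre] using complexGaussianIntegral_ofReal_of_posDef hRe (Complex.re ∘ c)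

/-- Let `B` be a symmetric `m×m` complex matrix (`Bᵀ = B`) whose real
part `Re B` is positive definite, and let `c ∈ ℂᵐ`.  Then `B` is invertible, the integral
`I := ∫_{ℝᵐ} exp(−½ xᵀBx + cᵀx) dx` (with `dx` equal to `(2π)^{−m/2}` times Lebesgue
measure) converges, and `I² · det B = exp(cᵀB⁻¹c)`.  In particular, when `B` is real and
`c = 0`, `I = (det B)^{−1/2}` with the positive square root. -/
theorem stmt_13 (m : ℕ) (B : Matrix (Fin m) (Fin m) ℂ) (hBsymm : B.transpose = B)
    (hRe : ∀ x : Fin m → ℝ, x ≠ 0 → 0 < ∑ i, ∑ j, (B i j).re * x i * x j)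
    (c : Fin m → ℂ) :
    IsUnit B ∧
    Integrable (fun x : Fin m → ℝ =>
      Complex.exp (-(2⁻¹ : ℂ) * ∑ i, ∑ j, B i j * (x i : ℂ) * (x j : ℂ) +
        ∑ i, c i * (x i : ℂ))) ∧
    ((((2 * Real.pi) ^ (-(m : ℝ) / 2) : ℝ) : ℂ) *
        ∫ x : Fin m → ℝ, Complex.exp (-(2⁻¹ : ℂ) * ∑ i, ∑ j, B i j * (x i : ℂ) * (x j : ℂ) +
          ∑ i, c i * (x i : ℂ))) ^ 2 * B.det =
      Complex.exp (∑ i, ∑ j, B⁻¹ i j * c i * c j) ∧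
    ((∀ i j, (B i j).im = 0) → c = 0 →
      (((2 * Real.pi) ^ (-(m : ℝ) / 2) : ℝ) : ℂ) *
        ∫ x : Fin m → ℝ, Complex.exp (-(2⁻¹ : ℂ) * ∑ i, ∑ j, B i j * (x i : ℂ) * (x j : ℂ) +
          ∑ i, c i * (x i : ℂ)) =
        (((B.map Complex.re).det ^ (-(1 : ℝ) / 2) : ℝ) : ℂ)) := by
  have h := stmt_13_general hBsymm (posDef_of_sum_pos (IsSymm.map hBsymm Complex.re) hRe) c
  simp only [complexGaussianIntegral, complexGaussian_eq_exp_sum, dotProduct_mulVec_self_eq_sum,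
    Fintype.card_fin] at h
  obtain ⟨hunit, hint, hsq, hreal⟩ := h
  exact ⟨hunit, hint, hsq, fun him hc => (hreal him (by simp [hc])).trans (by simp [hc])⟩
end

section
/- Let T : V → V be ℝ-linear with T∘J = −J∘T, Tᵗ = T, and 1 − T² positive definite. Then ∫_V exp(½ d(u,Tu) − ½ d(u,u)) du = (det_ℝ(1 − T²))^{−1/4}, where du is (2π)^{−m} times the Riemannian volume measure on V and det_ℝ denotes the determinant of an ℝ-linear operator on V. (This is the squared Fock-space norm ‖f_T‖² of the Gaussian vector f_T(u) := exp(¼⟨u,Tu⟩).) -/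
/-!
Conjugation by `J` exchanges `1 - T` and `1 + T`, so the two have the same determinant and
`det (1 - T²) = det (1 - T)²`. The integrand is the Gaussian `exp (-½ ⟪u, (1 - T) u⟫)`, and
`2 (1 - T) = (1 - T²) + (1 - T)²` shows that `1 - T` is positive definite. Writing a positive
definite `A` as `Sᵗ S` turns the quadratic form `⟪u, A u⟫` into `‖S u‖²`, so the substitution
`v = S u` reduces the integral to the standard Gaussian one and contributes the factor
`|det S|⁻¹ = (det A)^(-1/2)`.
-/

open scoped RealInnerProductSpace
open MeasureTheory

lemma isConj_one_sub_one_add_of_anticommute {R : Type*} [Ring R] {j t : R} (hj : IsUnit j)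
    (htj : t * j = -(j * t)) : IsConj (1 - t) (1 + t) := by
  obtain ⟨u, rfl⟩ := hj
  refine ⟨u, ?_⟩
  rw [SemiconjBy, mul_sub, add_mul, htj, mul_one, one_mul, sub_eq_add_neg]

lemma det_one_sub_mul_self_of_anticommute {R M : Type*} [CommRing R] [AddCommGroup M] [Module R M]
    {J T : Module.End R M} (hJ : IsUnit J) (hTJ : T * J = -(J * T)) :
    LinearMap.det (1 - T * T) = LinearMap.det (1 - T) ^ 2 := by
  have hfactor : 1 - T * T = (1 - T) * (1 + T) := by noncomm_ring
  have hconj : LinearMap.det (1 - T) = LinearMap.det (1 + T) :=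
    isConj_iff_eq.mp (LinearMap.det.map_isConj (isConj_one_sub_one_add_of_anticommute hJ hTJ))
  rw [hfactor, map_mul, ← hconj, sq]

lemma integral_comp_linearMap_s14 {E F : Type*} [NormedAddCommGroup E] [NormedSpace ℝ E]
    [FiniteDimensional ℝ E] [MeasurableSpace E] [BorelSpace E] [NormedAddCommGroup F]
    [NormedSpace ℝ F] (μ : Measure E) [μ.IsAddHaarMeasure] {S : E →ₗ[ℝ] E}
    (hS : LinearMap.det S ≠ 0) (f : E → F) :
    ∫ x, f (S x) ∂μ = |LinearMap.det S|⁻¹ • ∫ x, f x ∂μ := by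
  have hemb : MeasurableEmbedding S :=
    (S.equivOfDetNeZero hS).toContinuousLinearEquiv.toHomeomorph.measurableEmbedding
  rw [← hemb.integral_map, Measure.map_linearMap_addHaar_eq_smul_addHaar μ hS,
    integral_smul_measure, ENNReal.toReal_ofReal (abs_nonneg _), abs_inv]

section Positive

variable {𝕜 E : Type*} [RCLike 𝕜] [NormedAddCommGroup E] [InnerProductSpace 𝕜 E]
  [FiniteDimensional 𝕜 E] {A : Module.End 𝕜 E}

open scoped MatrixOrder in
lemma exists_adjoint_mul_self_eq_of_isPositive (hA : A.IsPositive) :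
    ∃ S : Module.End 𝕜 E, LinearMap.adjoint S * S = A := by
  let b := stdOrthonormalBasis 𝕜 E
  let Φ := LinearMap.toMatrixOrthonormal b
  have hΦA : 0 ≤ Φ A := ((LinearMap.posSemidef_toMatrix_iff b).mpr hA).nonneg
  obtain ⟨B, hB⟩ := CStarAlgebra.nonneg_iff_eq_star_mul_self.mp hΦA
  refine ⟨Φ.symm B, Φ.injective ?_⟩
  calc Φ (star (Φ.symm B) * Φ.symm B)
      = star (Φ (Φ.symm B)) * Φ (Φ.symm B) := by rw [map_mul, map_star]
    _ = Φ A := by rw [Φ.apply_symm_apply, hB]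

lemma det_adjoint_mul_self (S : Module.End 𝕜 E) :
    LinearMap.det (LinearMap.adjoint S * S) = ((‖LinearMap.det S‖ ^ 2 : ℝ) : 𝕜) := by
  rw [← S.normDet_eq_norm_det]
  exact S.normDet_sq.symm

open scoped ComplexOrder in
lemma det_nonneg_of_isPositive (hA : A.IsPositive) : 0 ≤ LinearMap.det A := by
  let b := stdOrthonormalBasis 𝕜 E
  rw [← LinearMap.det_toMatrix b.toBasis]
  exact ((LinearMap.posSemidef_toMatrix_iff b).mpr hA).det_nonneg

lemma det_ne_zero_of_forall_inner_map_self_ne_zero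
    (hA : ∀ v : E, v ≠ 0 → inner 𝕜 v (A v) ≠ 0) : LinearMap.det A ≠ 0 := by
  rw [Ne, LinearMap.det_eq_zero_iff_ker_ne_bot, not_not, LinearMap.ker_eq_bot']
  intro v hv
  by_contra hv0
  exact hA v hv0 (by rw [hv, inner_zero_right])

end Positive

section RealInnerProductSpace

variable {V : Type*} [NormedAddCommGroup V] [InnerProductSpace ℝ V]

lemma isPositive_of_forall_inner_map_self_pos {A : Module.End ℝ V} (hA : A.IsSymmetric)
    (hpos : ∀ v, v ≠ 0 → 0 < ⟪v, A v⟫) : A.IsPositive := by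
  refine ⟨hA, fun v ↦ ?_⟩
  obtain rfl | hv := eq_or_ne v 0
  · simp
  · exact (hA v v ▸ hpos v hv).le

lemma inner_one_sub_map_self_pos {T : Module.End ℝ V} (hT : T.IsSymmetric) {v : V}
    (hv : 0 < ⟪v, (1 - T * T) v⟫) : 0 < ⟪v, (1 - T) v⟫ := by
  have hsum : 2 * ⟪v, (1 - T) v⟫ = ⟪v, (1 - T * T) v⟫ + ⟪(1 - T) v, (1 - T) v⟫ := by
    simp only [LinearMap.sub_apply, Module.End.one_apply, Module.End.mul_apply, inner_sub_left,
      inner_sub_right, hT v v, hT v (T v)]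
    ring
  have hsq : 0 ≤ ⟪(1 - T) v, (1 - T) v⟫ := real_inner_self_nonneg
  linarith

variable [FiniteDimensional ℝ V] [MeasurableSpace V] [BorelSpace V]

theorem integral_rexp_neg_mul_inner_map_self {b : ℝ} (hb : 0 < b) {A : Module.End ℝ V}
    (hA : A.IsPositive) (hdet : LinearMap.det A ≠ 0) :
    ∫ v : V, Real.exp (-b * ⟪v, A v⟫) =
      (Real.pi / b) ^ (Module.finrank ℝ V / 2 : ℝ) * (√(LinearMap.det A))⁻¹ := by
  obtain ⟨S, rfl⟩ := exists_adjoint_mul_self_eq_of_isPositive hA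
  have hS : LinearMap.det S ≠ 0 := right_ne_zero_of_mul (map_mul LinearMap.det _ S ▸ hdet)
  have hroot : √(LinearMap.det (LinearMap.adjoint S * S)) = |LinearMap.det S| := by
    rw [det_adjoint_mul_self]
    exact Real.sqrt_sq (abs_nonneg _)
  have hform (v : V) : ⟪v, (LinearMap.adjoint S * S) v⟫ = ‖S v‖ ^ 2 := by
    rw [Module.End.mul_apply, LinearMap.adjoint_inner_right, real_inner_self_eq_norm_sq]
  calc ∫ v : V, Real.exp (-b * ⟪v, (LinearMap.adjoint S * S) v⟫)
      = ∫ v : V, Real.exp (-b * ‖S v‖ ^ 2) := by simp_rw [hform]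
    _ = |LinearMap.det S|⁻¹ * ∫ v : V, Real.exp (-b * ‖v‖ ^ 2) :=
      integral_comp_linearMap_s14 volume hS fun v ↦ Real.exp (-b * ‖v‖ ^ 2)
    _ = _ := by rw [GaussianFourier.integral_rexp_neg_mul_sq_norm hb, hroot, mul_comm]

theorem stmt_14_general {J T : Module.End ℝ V} (hJ : IsUnit J) (hTJ : T * J = -(J * T))
    (hTsym : LinearMap.adjoint T = T) (hTpos : ∀ v : V, v ≠ 0 → 0 < ⟪v, (1 - T * T) v⟫) :
    ((2 * Real.pi) ^ (Module.finrank ℝ V / 2 : ℝ))⁻¹ *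
      ∫ u : V, Real.exp (2⁻¹ * ⟪u, T u⟫ - 2⁻¹ * ⟪u, u⟫) =
      LinearMap.det (1 - T * T) ^ (-(1 : ℝ) / 4) := by
  have hT : T.IsSymmetric := (LinearMap.isSymmetric_iff_isSelfAdjoint T).mpr hTsym
  have hpos (v : V) (hv : v ≠ 0) : 0 < ⟪v, (1 - T) v⟫ :=
    inner_one_sub_map_self_pos hT (hTpos v hv)
  have hA : (1 - T).IsPositive :=
    isPositive_of_forall_inner_map_self_pos (LinearMap.IsSymmetric.one.sub hT) hpos
  have hdet : LinearMap.det (1 - T) ≠ 0 :=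
    det_ne_zero_of_forall_inner_map_self_ne_zero fun v hv ↦ (hpos v hv).ne'
  have hdet_nonneg : 0 ≤ LinearMap.det (1 - T) := det_nonneg_of_isPositive hA
  have hexp (u : V) : 2⁻¹ * ⟪u, T u⟫ - 2⁻¹ * ⟪u, u⟫ = -2⁻¹ * ⟪u, (1 - T) u⟫ := by
    rw [LinearMap.sub_apply, Module.End.one_apply, inner_sub_right]
    ring
  have hroot : (√(LinearMap.det (1 - T)))⁻¹ = LinearMap.det (1 - T * T) ^ (-(1 : ℝ) / 4) := by
    rw [det_one_sub_mul_self_of_anticommute hJ hTJ, Real.sqrt_eq_rpow,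
      ← Real.rpow_neg hdet_nonneg, ← Real.rpow_natCast_mul hdet_nonneg]
    norm_num
  simp_rw [hexp]
  rw [integral_rexp_neg_mul_inner_map_self (by norm_num) hA hdet, div_inv_eq_mul,
    mul_comm Real.pi, inv_mul_cancel_left₀ (by positivity), hroot]

end RealInnerProductSpace

/-- Let `T : V → V` be ℝ-linear with `T∘J = −J∘T`, `Tᵗ = T`, and
`1 − T²` positive definite.  Then `∫_V exp(½ d(u,Tu) − ½ d(u,u)) du = det_ℝ(1 − T²)^{−1/4}`,
where `du` is `(2π)^{−m}` times the Riemannian volume measure on `V` and `det_ℝ` denotes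
the determinant of an ℝ-linear operator on `V`.  (This is the squared Fock-space norm
`‖f_T‖²` of the Gaussian vector `f_T(u) := exp(¼⟨u,Tu⟩)`.) -/
theorem stmt_14 {V : Type*} [NormedAddCommGroup V] [InnerProductSpace ℝ V]
    [FiniteDimensional ℝ V] [MeasurableSpace V] [BorelSpace V]
    (m : ℕ) (hdim : Module.finrank ℝ V = 2 * m)
    (J : Module.End ℝ V) (hJ2 : J * J = -1)
    (hJd : ∀ u v : V, ⟪J u, J v⟫ = ⟪u, v⟫)
    (T : Module.End ℝ V)
    (hTJ : T * J = -(J * T)) (hTsym : LinearMap.adjoint T = T)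
    (hTpos : ∀ v : V, v ≠ 0 → 0 < ⟪v, (1 - T * T) v⟫) :
    ((2 * Real.pi) ^ m)⁻¹ *
      ∫ u : V, Real.exp (2⁻¹ * ⟪u, T u⟫ - 2⁻¹ * ⟪u, u⟫) =
      LinearMap.det ((1 - T * T : Module.End ℝ V) : V →ₗ[ℝ] V) ^ (-(1 : ℝ) / 4) := by
  have hJ : IsUnit J := IsUnit.of_mul_eq_one (-J) (by rw [mul_neg, hJ2, neg_neg])
  simpa [hdim] using stmt_14_general hJ hTJ hTsym hTpos
end

section
/- Let T : V → V be ℝ-linear with T∘J = −J∘T, Tᵗ = T, and 1 − T² positive definite, and let v, w ∈ V. Then ∫_V exp(¼(⟨u,Tu⟩ + ⟨Tu,u⟩ + 2⟨u,v⟩ + 2⟨w,u⟩) − ½ d(u,u)) du = (det_ℝ(1 − T²))^{−1/4} · exp(¼(⟨T(1−T²)⁻¹v, v⟩ + 2⟨w, (1−T²)⁻¹v⟩ + ⟨w, T(1−T²)⁻¹w⟩)), where du is (2π)^{−m} times the Riemannian volume measure on V and det_ℝ denotes the determinant of an ℝ-linear operator on V. -/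
/-!
Since `⟨u,Tu⟩ + ⟨Tu,u⟩ = 2 d(u,Tu)`, the quadratic part of the exponent is `-½ d(u,(1 - T)u)`, with
`1 - T` symmetric and positive definite, so the integral is governed by the critical point of the
exponent in the complexification `V ⊗ ℂ`. Splitting `V ⊗ ℂ` into the two eigenspaces of `J`, which
`T` interchanges, this critical point is `½((x - iJx) + (y + iJy))` with `x - Ty = v` and
`y - Tx = w`, and the exponent there equals `¼(⟨w,x⟩ + ⟨y,v⟩)`. The system is solved by
`x = (1 - T²)⁻¹v + T(1 - T²)⁻¹w` and `y = (1 - T²)⁻¹w + T(1 - T²)⁻¹v`.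

Conjugation by `J` turns `1 - T` into `1 + T`, so `det(1 - T²) = det(1 - T)²`; this is where the
exponent `-1/4` comes from.
-/

open scoped RealInnerProductSpace
open MeasureTheory

/-- The complex scalar product `⟨u,v⟩ := d(u,v) + i·d(Ju,v)` on `V` (antilinear in `u`)
associated to the complex structure `J`. -/
noncomputable def cInner {V : Type*} [NormedAddCommGroup V] [InnerProductSpace ℝ V]
    (J : Module.End ℝ V) (u v : V) : ℂ :=
  Complex.ofReal ⟪u, v⟫ + Complex.ofReal ⟪J u, v⟫ * Complex.I

section SymmetricOperator

variable {V : Type*} [NormedAddCommGroup V] [InnerProductSpace ℝ V] {A T : Module.End ℝ V}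

lemma inner_one_sub_apply_pos (hT : T.IsSymmetric)
    (hpos : ∀ x : V, x ≠ 0 → 0 < ⟪x, (1 - T * T) x⟫) {x : V} (hx : x ≠ 0) :
    0 < ⟪x, (1 - T) x⟫ := by
  have hsum : 2 * ⟪x, (1 - T) x⟫ = ⟪x - T x, x - T x⟫ + ⟪x, (1 - T * T) x⟫ := by
    simp only [LinearMap.sub_apply, Module.End.one_apply, Module.End.mul_apply, inner_sub_left,
      inner_sub_right, hT x]
    ring
  linarith [hpos x hx, real_inner_self_nonneg (x := x - T x)]

variable [FiniteDimensional ℝ V]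

lemma isUnit_of_inner_apply_pos (hpos : ∀ x : V, x ≠ 0 → 0 < ⟪x, A x⟫) : IsUnit A := by
  rw [LinearMap.isUnit_iff_ker_eq_bot, LinearMap.ker_eq_bot']
  intro x hx
  by_contra hne
  simpa [hx] using hpos x hne

lemma inner_eigenvectorBasis_apply (hA : A.IsSymmetric) {n : ℕ} (hn : Module.finrank ℝ V = n)
    (i : Fin n) (x : V) :
    ⟪hA.eigenvectorBasis hn i, A x⟫ = hA.eigenvalues hn i * ⟪hA.eigenvectorBasis hn i, x⟫ := by
  rw [← hA, hA.apply_eigenvectorBasis, real_inner_smul_left, RCLike.ofReal_real_eq_id, id]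

lemma eigenvalues_pos_of_inner_apply_pos (hA : A.IsSymmetric) {n : ℕ}
    (hn : Module.finrank ℝ V = n) (hpos : ∀ x : V, x ≠ 0 → 0 < ⟪x, A x⟫) (i : Fin n) :
    0 < hA.eigenvalues hn i := by
  let e := hA.eigenvectorBasis hn
  have he := hpos (e i) (e.orthonormal.ne_zero i)
  rw [hA.apply_eigenvectorBasis, real_inner_smul_right, real_inner_self_eq_norm_sq,
    e.orthonormal.1 i] at he
  simpa using he

lemma det_pos_of_inner_apply_pos (hA : A.IsSymmetric) (hpos : ∀ x : V, x ≠ 0 → 0 < ⟪x, A x⟫) :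
    0 < LinearMap.det A := by
  rw [hA.det_eq_prod_eigenvalues rfl]
  exact Finset.prod_pos fun i _ => eigenvalues_pos_of_inner_apply_pos hA rfl hpos i

end SymmetricOperator

section GaussianIntegral

variable {V : Type*} [NormedAddCommGroup V] [InnerProductSpace ℝ V] [FiniteDimensional ℝ V]
  [MeasurableSpace V] [BorelSpace V]

lemma integral_cexp_neg_sum_mul_inner_sq_add {ι : Type*} [Fintype ι] (e : OrthonormalBasis ι ℝ V)
    {b : ι → ℂ} (hb : ∀ i, 0 < (b i).re) (c : ι → ℂ) :
    ∫ u : V, Complex.exp (-∑ i, b i * (⟪e i, u⟫ : ℂ) ^ 2 + ∑ i, c i * (⟪e i, u⟫ : ℂ)) =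
      ∏ i, (Real.pi / b i) ^ (1 / 2 : ℂ) * Complex.exp (c i ^ 2 / (4 * b i)) := by
  rw [← GaussianFourier.integral_cexp_neg_sum_mul_add hb c,
    ← (PiLp.volume_preserving_ofLp ι).integral_comp
      (MeasurableEquiv.toLp 2 _).symm.measurableEmbedding,
    ← e.measurePreserving_repr.integral_comp e.repr.toHomeomorph.measurableEmbedding]
  simp only [e.repr_apply_apply]

lemma prod_cpow_one_half_eq_sqrt {ι : Type*} [Fintype ι] {r : ι → ℝ} (hr : ∀ i, 0 ≤ r i) :
    ∏ i, (r i : ℂ) ^ (1 / 2 : ℂ) = (√(∏ i, r i) : ℝ) := by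
  rw [Real.sqrt_prod _ fun i _ => hr i, Complex.ofReal_prod]
  refine Finset.prod_congr rfl fun i _ => ?_
  rw [Real.sqrt_eq_rpow, Complex.ofReal_cpow (hr i)]
  norm_num

lemma integral_cexp_neg_inner_apply_add_sum {A : Module.End ℝ V} (hA : A.IsSymmetric) {n : ℕ}
    (hn : Module.finrank ℝ V = n) (hpos : ∀ x : V, x ≠ 0 → 0 < ⟪x, A x⟫) (c : Fin n → ℂ) :
    ∫ u : V, Complex.exp (-(⟪u, A u⟫ / 2 : ℂ) + ∑ i, c i * (⟪hA.eigenvectorBasis hn i, u⟫ : ℂ)) =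
      (√((2 * Real.pi) ^ n / LinearMap.det A) : ℝ) *
        Complex.exp ((∑ i, c i ^ 2 / (hA.eigenvalues hn i : ℂ)) / 2) := by
  let e := hA.eigenvectorBasis hn
  let l := hA.eigenvalues hn
  have hl : ∀ i, 0 < l i := eigenvalues_pos_of_inner_apply_pos hA hn hpos
  have hquad : ∀ u, (⟪u, A u⟫ / 2 : ℂ) = ∑ i, ((l i / 2 : ℝ) : ℂ) * (⟪e i, u⟫ : ℂ) ^ 2 :=
    fun u => by
      rw [← e.sum_inner_mul_inner u (A u), Complex.ofReal_sum, Finset.sum_div]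
      refine Finset.sum_congr rfl fun i _ => ?_
      rw [inner_eigenvectorBasis_apply hA hn, real_inner_comm]
      push_cast
      ring
  have hprod : ∏ i, Real.pi / (l i / 2) = (2 * Real.pi) ^ n / LinearMap.det A := by
    have hterm : ∀ i, Real.pi / (l i / 2) = 2 * Real.pi / l i := fun i => by field_simp
    simp only [hterm, Finset.prod_div_distrib, Finset.prod_const, Finset.card_univ,
      Fintype.card_fin, hA.det_eq_prod_eigenvalues hn]
    rfl
  have hexponent : ∑ i, c i ^ 2 / (4 * ((l i / 2 : ℝ) : ℂ)) = (∑ i, c i ^ 2 / (l i : ℂ)) / 2 := by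
    rw [Finset.sum_div]
    refine Finset.sum_congr rfl fun i _ => ?_
    push_cast
    field_simp
    norm_num
  simp only [hquad]
  rw [integral_cexp_neg_sum_mul_inner_sq_add e (fun i => half_pos (hl i)) c,
    Finset.prod_mul_distrib, ← Complex.exp_sum, hexponent, ← hprod,
    ← prod_cpow_one_half_eq_sqrt fun i => (div_pos Real.pi_pos (half_pos (hl i))).le]
  simp only [Complex.ofReal_div, l]

/-- `p + iq` is the critical point of the exponent, extended to `V ⊗ ℂ`. -/
lemma integral_cexp_neg_inner_apply_add {A : Module.End ℝ V} (hA : A.IsSymmetric)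
    (hpos : ∀ x : V, x ≠ 0 → 0 < ⟪x, A x⟫) {φ : V → ℂ} {p q : V}
    (hφ : ∀ u, φ u = (⟪A p, u⟫ : ℂ) + (⟪A q, u⟫ : ℂ) * Complex.I) :
    ∫ u : V, Complex.exp (-(⟪u, A u⟫ / 2 : ℂ) + φ u) =
      (√((2 * Real.pi) ^ Module.finrank ℝ V / LinearMap.det A) : ℝ) *
        Complex.exp ((φ p + φ q * Complex.I) / 2) := by
  let e := hA.eigenvectorBasis rfl
  let l := hA.eigenvalues rfl
  have hl : ∀ i, (l i : ℂ) ≠ 0 := fun i =>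
    Complex.ofReal_ne_zero.2 (eigenvalues_pos_of_inner_apply_pos hA rfl hpos i).ne'
  let c := fun i => (l i : ℂ) * (⟪e i, p⟫ + ⟪e i, q⟫ * Complex.I)
  have hφ_expand : ∀ u, φ u = ∑ i, c i * (⟪e i, u⟫ : ℂ) := fun u => by
    rw [hφ, ← e.sum_inner_mul_inner (A p) u, ← e.sum_inner_mul_inner (A q) u, Complex.ofReal_sum,
      Complex.ofReal_sum, Finset.sum_mul, ← Finset.sum_add_distrib]
    refine Finset.sum_congr rfl fun i _ => ?_
    rw [real_inner_comm, real_inner_comm (e i) (A q), inner_eigenvectorBasis_apply hA rfl,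
      inner_eigenvectorBasis_apply hA rfl]
    push_cast
    ring
  have hcrit : ∑ i, c i ^ 2 / (l i : ℂ) = φ p + φ q * Complex.I := by
    rw [hφ_expand p, hφ_expand q, Finset.sum_mul, ← Finset.sum_add_distrib]
    refine Finset.sum_congr rfl fun i _ => ?_
    have hli := hl i
    simp only [c]
    field_simp
  simp only [hφ_expand]
  rw [integral_cexp_neg_inner_apply_add_sum hA rfl hpos c, hcrit, hφ_expand p, hφ_expand q]

end GaussianIntegral

lemma sqrt_pow_two_mul_div_eq_mul_rpow {a d : ℝ} (ha : 0 ≤ a) (hd : 0 ≤ d) (m : ℕ) :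
    √(a ^ (2 * m) / d) = a ^ m * (d ^ 2) ^ (-(1 : ℝ) / 4) := by
  rw [Real.sqrt_div' _ hd, pow_mul', Real.sqrt_sq (pow_nonneg ha m), div_eq_mul_inv,
    Real.sqrt_eq_rpow, ← Real.rpow_neg hd, ← Real.rpow_natCast d 2, ← Real.rpow_mul hd]
  norm_num

section Anticommuting

lemma commute_one_sub_mul_self_of_anticommute {R : Type*} [Ring R] {a b : R}
    (hab : a * b = -(b * a)) : Commute (1 - a * a) b := by
  have haab : a * a * b = b * (a * a) := by
    rw [mul_assoc, hab, mul_neg, ← mul_assoc, hab, neg_mul, neg_neg, mul_assoc]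
  rw [commute_iff_eq, sub_mul, mul_sub, one_mul, mul_one, haab]

end Anticommuting

section ComplexScalarProduct

variable {V : Type*} [NormedAddCommGroup V] [InnerProductSpace ℝ V] {J : Module.End ℝ V}

lemma cInner_add_left (u u' v : V) : cInner J (u + u') v = cInner J u v + cInner J u' v := by
  simp only [cInner, map_add, inner_add_left, Complex.ofReal_add]
  ring

lemma cInner_add_right (u v v' : V) : cInner J u (v + v') = cInner J u v + cInner J u v' := by
  simp only [cInner, inner_add_right, Complex.ofReal_add]
  ring

lemma cInner_sub_left (u u' v : V) : cInner J (u - u') v = cInner J u v - cInner J u' v := by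
  simp only [cInner, map_sub, inner_sub_left, Complex.ofReal_sub]
  ring

lemma cInner_sub_right (u v v' : V) : cInner J u (v - v') = cInner J u v - cInner J u v' := by
  simp only [cInner, inner_sub_right, Complex.ofReal_sub]
  ring

lemma cInner_smul_left (r : ℝ) (u v : V) : cInner J (r • u) v = r * cInner J u v := by
  simp only [cInner, map_smul, real_inner_smul_left, Complex.ofReal_mul]
  ring

lemma cInner_smul_right (r : ℝ) (u v : V) : cInner J u (r • v) = r * cInner J u v := by
  simp only [cInner, real_inner_smul_right, Complex.ofReal_mul]
  ring

lemma cInner_map_left_of_commute {P : Module.End ℝ V} (hP : P.IsSymmetric) (hPJ : Commute P J)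
    (u v : V) : cInner J (P u) v = cInner J u (P v) := by
  have hPJu : J (P u) = P (J u) := (LinearMap.congr_fun hPJ.eq u).symm
  simp only [cInner, hPJu, hP u v, hP (J u) v]

/-- `J` is an isometric complex structure on the real inner product space `V`: `J² = -1` and `J` is
orthogonal, so that `cInner J` is a complex scalar product. -/
structure IsOrthogonalComplexStructure (J : Module.End ℝ V) : Prop where
  mul_self : J * J = -1
  inner_map_map : ∀ u v : V, ⟪J u, J v⟫ = ⟪u, v⟫

namespace IsOrthogonalComplexStructure

lemma apply_apply (hJ : IsOrthogonalComplexStructure J) (u : V) : J (J u) = -u := by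
  simpa using LinearMap.congr_fun hJ.mul_self u

lemma isUnit (hJ : IsOrthogonalComplexStructure J) : IsUnit J :=
  ⟨⟨J, -J, by simp [hJ.mul_self], by simp [hJ.mul_self]⟩, rfl⟩

lemma inner_map_left (hJ : IsOrthogonalComplexStructure J) (u v : V) : ⟪J u, v⟫ = -⟪u, J v⟫ := by
  rw [← hJ.inner_map_map u (J v), hJ.apply_apply, inner_neg_right, neg_neg]

lemma cInner_map_left (hJ : IsOrthogonalComplexStructure J) (u v : V) :
    cInner J (J u) v = -(cInner J u v * Complex.I) := by
  simp only [cInner, hJ.apply_apply, inner_neg_left, Complex.ofReal_neg]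
  linear_combination (⟪J u, v⟫ : ℂ) * Complex.I_sq

lemma cInner_map_right (hJ : IsOrthogonalComplexStructure J) (u v : V) :
    cInner J u (J v) = cInner J u v * Complex.I := by
  have hskew : ⟪u, J v⟫ = -⟪J u, v⟫ := by rw [hJ.inner_map_left, neg_neg]
  simp only [cInner, hJ.inner_map_map, hskew, Complex.ofReal_neg]
  linear_combination -(⟪J u, v⟫ : ℂ) * Complex.I_sq

lemma cInner_add_cInner_swap (hJ : IsOrthogonalComplexStructure J) (u v : V) :
    cInner J u v + cInner J v u = 2 * (⟪u, v⟫ : ℂ) := by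
  simp only [cInner, hJ.inner_map_left v u, real_inner_comm, Complex.ofReal_neg]
  ring

end IsOrthogonalComplexStructure

end ComplexScalarProduct

section AntilinearGaussian

variable {V : Type*} [NormedAddCommGroup V] [InnerProductSpace ℝ V] {J T : Module.End ℝ V}

lemma cInner_criticalPoint (hJ : IsOrthogonalComplexStructure J) (v w x y : V) :
    (cInner J ((2⁻¹ : ℝ) • (x + y)) v + cInner J w ((2⁻¹ : ℝ) • (x + y))) +
      (cInner J ((2⁻¹ : ℝ) • J (y - x)) v + cInner J w ((2⁻¹ : ℝ) • J (y - x))) * Complex.I =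
    cInner J w x + cInner J y v := by
  simp only [cInner_smul_left, cInner_smul_right, hJ.cInner_map_left, hJ.cInner_map_right,
    cInner_add_left, cInner_add_right, cInner_sub_left, cInner_sub_right]
  push_cast
  linear_combination (2⁻¹ : ℂ) * (cInner J w y - cInner J w x - cInner J y v + cInner J x v) *
    Complex.I_sq

lemma cInner_add_cInner_eq_inner_one_sub_apply (hJ : IsOrthogonalComplexStructure J)
    (hTJ : T * J = -(J * T)) {v w x y : V} (hx : x - T y = v) (hy : y - T x = w) (u : V) :
    (cInner J u v + cInner J w u) / 2 =
      (⟪(1 - T) ((2⁻¹ : ℝ) • (x + y)), u⟫ : ℂ) +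
        (⟪(1 - T) ((2⁻¹ : ℝ) • J (y - x)), u⟫ : ℂ) * Complex.I := by
  have hTJ' : ∀ z, T (J z) = -J (T z) := fun z => by simpa using LinearMap.congr_fun hTJ z
  have hp : (1 - T) ((2⁻¹ : ℝ) • (x + y)) = (2⁻¹ : ℝ) • (v + w) := by
    simp only [← hx, ← hy, LinearMap.sub_apply, Module.End.one_apply, map_smul, map_add]
    module
  have hq : (1 - T) ((2⁻¹ : ℝ) • J (y - x)) = (2⁻¹ : ℝ) • (J w - J v) := by
    simp only [← hx, ← hy, LinearMap.sub_apply, Module.End.one_apply, map_smul, map_sub, hTJ']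
    module
  have hJu : ⟪J u, v⟫ = -⟪J v, u⟫ := by rw [hJ.inner_map_left, real_inner_comm]
  simp only [hp, hq, cInner, hJu, real_inner_smul_left, inner_add_left, inner_sub_left,
    real_inner_comm u v]
  push_cast
  ring

lemma integral_cexp_cInner_of_anticommute [FiniteDimensional ℝ V] [MeasurableSpace V] [BorelSpace V]
    (hJ : IsOrthogonalComplexStructure J) (hTJ : T * J = -(J * T)) (hT : T.IsSymmetric)
    (hpos : ∀ x : V, x ≠ 0 → 0 < ⟪x, (1 - T) x⟫) {v w x y : V} (hx : x - T y = v)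
    (hy : y - T x = w) :
    ∫ u : V, Complex.exp ((4⁻¹ : ℂ) * (cInner J u (T u) + cInner J (T u) u +
        2 * cInner J u v + 2 * cInner J w u) - (2⁻¹ : ℂ) * Complex.ofReal ⟪u, u⟫) =
      (√((2 * Real.pi) ^ Module.finrank ℝ V / LinearMap.det (1 - T)) : ℝ) *
        Complex.exp ((4⁻¹ : ℂ) * (cInner J w x + cInner J y v)) := by
  have hexponent : ∀ u, (4⁻¹ : ℂ) * (cInner J u (T u) + cInner J (T u) u +
      2 * cInner J u v + 2 * cInner J w u) - (2⁻¹ : ℂ) * Complex.ofReal ⟪u, u⟫ =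
      -(⟪u, (1 - T) u⟫ / 2 : ℂ) + (cInner J u v + cInner J w u) / 2 := fun u => by
    rw [hJ.cInner_add_cInner_swap, LinearMap.sub_apply, Module.End.one_apply, inner_sub_right]
    push_cast
    ring
  simp only [hexponent]
  rw [integral_cexp_neg_inner_apply_add (LinearMap.IsSymmetric.one.sub hT) hpos
    (cInner_add_cInner_eq_inner_one_sub_apply hJ hTJ hx hy)]
  congr 2
  linear_combination (4⁻¹ : ℂ) * cInner_criticalPoint hJ v w x y

end AntilinearGaussian

/-- Let `T : V → V` be ℝ-linear with `T∘J = −J∘T`, `Tᵗ = T`, and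
`1 − T²` positive definite, and let `v, w ∈ V`.  Then
`∫_V exp(¼(⟨u,Tu⟩ + ⟨Tu,u⟩ + 2⟨u,v⟩ + 2⟨w,u⟩) − ½ d(u,u)) du
  = det_ℝ(1 − T²)^{−1/4} · exp(¼(⟨T(1−T²)⁻¹v, v⟩ + 2⟨w, (1−T²)⁻¹v⟩ + ⟨w, T(1−T²)⁻¹w⟩))`,
where `du` is `(2π)^{−m}` times the Riemannian volume measure on `V`. -/
theorem stmt_15 {V : Type*} [NormedAddCommGroup V] [InnerProductSpace ℝ V]
    [FiniteDimensional ℝ V] [MeasurableSpace V] [BorelSpace V]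
    (m : ℕ) (hdim : Module.finrank ℝ V = 2 * m)
    (J : Module.End ℝ V) (hJ2 : J * J = -1)
    (hJd : ∀ u v : V, ⟪J u, J v⟫ = ⟪u, v⟫)
    (T : Module.End ℝ V)
    (hTJ : T * J = -(J * T)) (hTsym : LinearMap.adjoint T = T)
    (hTpos : ∀ v : V, v ≠ 0 → 0 < ⟪v, (1 - T * T) v⟫)
    (v w : V) :
    (((2 * Real.pi) ^ m : ℝ) : ℂ)⁻¹ *
      ∫ u : V, Complex.exp ((4⁻¹ : ℂ) * (cInner J u (T u) + cInner J (T u) u +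
          2 * cInner J u v + 2 * cInner J w u) -
        (2⁻¹ : ℂ) * Complex.ofReal ⟪u, u⟫) =
    Complex.ofReal (LinearMap.det ((1 - T * T : Module.End ℝ V) : V →ₗ[ℝ] V)
        ^ (-(1 : ℝ) / 4)) *
      Complex.exp ((4⁻¹ : ℂ) * (cInner J (T (Ring.inverse (1 - T * T) v)) v +
        2 * cInner J w (Ring.inverse (1 - T * T) v) +
        cInner J w (T (Ring.inverse (1 - T * T) w)))) := by
  have hJ : IsOrthogonalComplexStructure J := ⟨hJ2, hJd⟩
  have hT : T.IsSymmetric := (LinearMap.isSymmetric_iff_isSelfAdjoint T).2 hTsym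
  have hA : (1 - T).IsSymmetric := LinearMap.IsSymmetric.one.sub hT
  have hB : (1 - T * T).IsSymmetric :=
    LinearMap.IsSymmetric.one.sub (hT.mul_of_commute hT (Commute.refl T))
  have hpos : ∀ x : V, x ≠ 0 → 0 < ⟪x, (1 - T) x⟫ := fun x => inner_one_sub_apply_pos hT hTpos
  set S : Module.End ℝ V := Ring.inverse (1 - T * T)
  have hS : ∀ z, (1 - T * T) (S z) = z := LinearMap.congr_fun
    (Ring.mul_inverse_cancel _ (isUnit_of_inner_apply_pos hTpos))
  have hx : S v + T (S w) - T (S w + T (S v)) = v := by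
    simpa [add_comm (T (S w))] using hS v
  have hy : S w + T (S v) - T (S v + T (S w)) = w := by
    simpa [add_comm (T (S v))] using hS w
  have hSw : cInner J (S w) v = cInner J w (S v) := by
    rw [← hS v, ← cInner_map_left_of_commute hB (commute_one_sub_mul_self_of_anticommute hTJ),
      hS, hS]
  rw [integral_cexp_cInner_of_anticommute hJ hTJ hT hpos hx hy, hdim,
    sqrt_pow_two_mul_div_eq_mul_rpow (by positivity) (det_pos_of_inner_apply_pos hA hpos).le,
    det_one_sub_mul_self_of_anticommute hJ.isUnit hTJ, Complex.ofReal_mul, mul_assoc,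
    inv_mul_cancel_left₀ (by norm_cast; positivity), cInner_add_left, cInner_add_right, hSw]
  ring_nf
end
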